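/- Covert secrecy capacity with key assistance (Theorem 1): Let P_{X→BW} be a classical-quantum covert communication channel with binary input satisfying supp(σ_1) ⊆ supp(σ_0) and supp(ω_1) ⊆ supp(ω_0), and consider covert communication of classical information with secrecy via this channel without a public message (L_public = 0). Then the covert secrecy capacity with key assistance is C_S^key(P) = D(σ_1||σ_0) / √( (1/2) χ²(ω_1||ω_0) ). -/

import Mathlib

/-!
If every symbol is non-innocent independently with probability `a = c / √n`, Willie sees the
`n`-fold product of the mixture `a ω₁ + (1 - a) ω₀`, and
`n D(a ω₁ + (1 - a) ω₀ ‖ ω₀) → c² χ² / 2`. Covertness at level `δ` thus amounts to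
`c ≤ √(δ / (χ² / 2))`, while each non-innocent symbol conveys at most `D(σ₁ ‖ σ₀)` nats to Bob.

*Converse.* By the Gibbs variational bound against the product mixture, a covert code has average
weight at most that of the product distribution with the same covertness. For a decoder with small
error, binary tests of the codeword states against `σ₀^{⊗n}` bound `log M` by the average weight
times `D(σ₁ ‖ σ₀)`.

*Achievability.* A codebook of independent random codewords is itself used as the key. Whatever the
message, Willie then faces exactly the product mixture, which settles covertness and secrecy at
once. Bob knows the codebook and decodes by sequential tests of `σ₁` against `σ₀` on the
non-innocent positions.
-/

open Matrix Filter
open scoped Kronecker Classical ComplexOrder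

noncomputable section

namespace CovertPaper



variable {ι : Type*} [Fintype ι] [DecidableEq ι]

/-- `ρ` is a density matrix (state). -/
def IsDensity (ρ : Matrix ι ι ℂ) : Prop := ρ.PosSemidef ∧ ρ.trace = 1

/-- `supp ρ ⊆ supp σ`, expressed (for Hermitian PSD matrices) as `ker σ ⊆ ker ρ`. -/
def SuppLE (ρ σ : Matrix ι ι ℂ) : Prop :=
  ∀ v : ι → ℂ, σ.mulVec v = 0 → ρ.mulVec v = 0

/-- Functional calculus on Hermitian matrices (junk value `0` otherwise). -/
def matFun (f : ℝ → ℝ) (A : Matrix ι ι ℂ) : Matrix ι ι ℂ :=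
  if hA : A.IsHermitian then
    (hA.eigenvectorUnitary : Matrix ι ι ℂ) *
      diagonal (fun i => (f (hA.eigenvalues i) : ℂ)) *
      (star (hA.eigenvectorUnitary : Matrix ι ι ℂ))
  else 0

/-- Matrix logarithm of a Hermitian matrix (`0` on the kernel, by `Real.log 0 = 0`). -/
def matLog (A : Matrix ι ι ℂ) : Matrix ι ι ℂ := matFun Real.log A

/-- Trace norm `‖A‖₁ = Tr √(AᴴA)`. -/
def traceNorm (A : Matrix ι ι ℂ) : ℝ := ((matFun Real.sqrt (Aᴴ * A)).trace).re

/-- Fidelity `F(ρ,σ) = ‖√ρ√σ‖₁²`. -/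
def fidelity (ρ σ : Matrix ι ι ℂ) : ℝ :=
  (traceNorm (matFun Real.sqrt ρ * matFun Real.sqrt σ)) ^ 2

/-- von Neumann entropy `H(ρ) = −Tr[ρ log ρ]` (natural logarithm). -/
def vnEnt (ρ : Matrix ι ι ℂ) : ℝ := -((ρ * matLog ρ).trace).re

/-- Quantum (Umegaki) relative entropy `D(ρ‖σ) = Tr[ρ (log ρ − log σ)]`; this real-valued
formula agrees with the usual definition whenever `supp ρ ⊆ supp σ`. -/
def relEnt (ρ σ : Matrix ι ι ℂ) : ℝ := ((ρ * (matLog ρ - matLog σ)).trace).re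

/-- The quantum chi-square divergence
`χ²(ρ‖σ) = (∂²/∂α²) D(αρ + (1−α)σ ‖ σ) |_{α=0}`. -/
def chiSq (ρ σ : Matrix ι ι ℂ) : ℝ :=
  iteratedDeriv 2 (fun α : ℝ => relEnt ((α : ℂ) • ρ + ((1 - α : ℝ) : ℂ) • σ) σ) 0

section PTrace

variable {α β : Type*} [Fintype α] [Fintype β]

/-- Partial trace over the second (right) tensor factor. -/
def ptraceRight (ρ : Matrix (α × β) (α × β) ℂ) : Matrix α α ℂ :=
  of fun a a' => ∑ b, ρ (a, b) (a', b)

/-- Partial trace over the first (left) tensor factor. -/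
def ptraceLeft (ρ : Matrix (α × β) (α × β) ℂ) : Matrix β β ℂ :=
  of fun b b' => ∑ a, ρ (a, b) (a, b')

/-- The product state `⊗_{i=1}^n ω_{x_i}` associated with a classical string `x^n`. -/
def stringState {d : ℕ} (ω : Fin d → Matrix β β ℂ) {n : ℕ} (x : Fin n → Fin d) :
    Matrix (Fin n → β) (Fin n → β) ℂ :=
  of fun a b => ∏ i, ω (x i) (a i) (b i)

/-- The `n`-fold tensor power `ω^{⊗n}`. -/
def tpow (ω : Matrix β β ℂ) (n : ℕ) : Matrix (Fin n → β) (Fin n → β) ℂ :=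
  of fun a b => ∏ i, ω (a i) (b i)

end PTrace

/-- Asymptotic little-o : `f ∈ o(g)` iff `f/g → 0`. -/
def LittleO (f g : ℕ → ℝ) : Prop :=
  Tendsto (fun n => f n / g n) atTop (nhds 0)

/-- Asymptotic little-omega : `f ∈ ω(g)` iff `|f/g| → ∞`. -/
def LittleOmega (f g : ℕ → ℝ) : Prop :=
  Tendsto (fun n => |f n / g n|) atTop atTop

section CQ

variable {B W : Type*} [Fintype B] [DecidableEq B] [Fintype W] [DecidableEq W]

/-- Bob's reduced output `σ_x` of the classical-quantum channel `π`. -/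
def bobOut (π : Fin 2 → Matrix (B × W) (B × W) ℂ) (x : Fin 2) : Matrix B B ℂ :=
  ptraceRight (π x)

/-- Willie's reduced output `ω_x` of the classical-quantum channel `π`. -/
def willieOut (π : Fin 2 → Matrix (B × W) (B × W) ℂ) (x : Fin 2) : Matrix W W ℂ :=
  ptraceLeft (π x)

variable (π : Fin 2 → Matrix (B × W) (B × W) ℂ)

/-- Bob's output state for the codeword `x^n`. -/
def bobWord {n : ℕ} (x : Fin n → Fin 2) : Matrix (Fin n → B) (Fin n → B) ℂ :=
  stringState (bobOut π) x

/-- Willie's output state for the codeword `x^n`. -/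
def willieWord {n : ℕ} (x : Fin n → Fin 2) : Matrix (Fin n → W) (Fin n → W) ℂ :=
  stringState (willieOut π) x

/-- `Λ` is a (sub-normalized) decoding POVM for each key value. -/
def IsPOVM {n M L K : ℕ} (Λ : Fin K → Fin M → Fin L → Matrix (Fin n → B) (Fin n → B) ℂ) :
    Prop :=
  (∀ k m ℓ, (Λ k m ℓ).PosSemidef) ∧
    ∀ k, ((1 : Matrix (Fin n → B) (Fin n → B) ℂ) - ∑ m, ∑ ℓ, Λ k m ℓ).PosSemidef

/-- Average decoding error probability of a covert secrecy code. -/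
def avgErr {n M L K : ℕ} (f : Fin M → Fin L → Fin K → Fin n → Fin 2)
    (Λ : Fin K → Fin M → Fin L → Matrix (Fin n → B) (Fin n → B) ℂ) : ℝ :=
  ((M : ℝ) * L * K)⁻¹ *
    ∑ m, ∑ ℓ, ∑ k, (1 - ((Λ k m ℓ * bobWord π (f m ℓ k)).trace).re)

/-- Willie's average output state `ρ̄_{W^n}` (averaged over message, public message and key). -/
def willieAvg {n M L K : ℕ} (f : Fin M → Fin L → Fin K → Fin n → Fin 2) :
    Matrix (Fin n → W) (Fin n → W) ℂ :=
  ((((M : ℝ) * L * K)⁻¹ : ℝ) : ℂ) • ∑ m, ∑ ℓ, ∑ k, willieWord π (f m ℓ k)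

/-- Willie's state `ρ_{W^n}^{(m)}` given the secret message `m` (averaged over `ℓ` and `k`). -/
def willieMsg {n M L K : ℕ} (f : Fin M → Fin L → Fin K → Fin n → Fin 2) (m : Fin M) :
    Matrix (Fin n → W) (Fin n → W) ℂ :=
  ((((L : ℝ) * K)⁻¹ : ℝ) : ℂ) • ∑ ℓ, ∑ k, willieWord π (f m ℓ k)

/-- The covertness criterion `D(ρ̄_{W^n} ‖ ω₀^{⊗n}) ≤ δ_cov`. -/
def Covert {n M L K : ℕ} (f : Fin M → Fin L → Fin K → Fin n → Fin 2) (δcov : ℝ) : Prop :=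
  relEnt (willieAvg π f) (tpow (willieOut π 0) n) ≤ δcov

/-- The secrecy criterion: some state `ρ̆` independent of `m` is `δ_sec`-close on average. -/
def Secret {n M L K : ℕ} (f : Fin M → Fin L → Fin K → Fin n → Fin 2) (δsec : ℝ) : Prop :=
  ∃ ρ' : Matrix (Fin n → W) (Fin n → W) ℂ, IsDensity ρ' ∧
    (M : ℝ)⁻¹ * ∑ m, traceNorm (willieMsg π f m - ρ') ≤ δsec

/-- Existence of an `(|M|,|L|,|K|,n,ε,δ_cov,δ_sec)` covert secrecy code. -/
def CodeExists (n M L K : ℕ) (ε δcov δsec : ℝ) : Prop :=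
  ∃ (f : Fin M → Fin L → Fin K → Fin n → Fin 2)
    (Λ : Fin K → Fin M → Fin L → Matrix (Fin n → B) (Fin n → B) ℂ),
      IsPOVM (B := B) Λ ∧ avgErr π f Λ ≤ ε ∧ Covert π f δcov ∧ Secret π f δsec

end CQ



section Statement0

variable {B W : Type*} [Fintype B] [DecidableEq B] [Fintype W] [DecidableEq W]

/-- `L_S > 0` is an achievable covert secrecy rate with key assistance and
no public message (`L_public = 0`, i.e. `|L| = 1`). -/
def AchievableWithKey (π : Fin 2 → Matrix (B × W) (B × W) ℂ) (LS : ℝ) : Prop :=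
  0 < LS ∧ ∀ ε δcov δsec : ℝ, 0 < ε → 0 < δcov → 0 < δsec →
    ∀ᶠ n : ℕ in atTop, ∃ M K : ℕ,
      Real.sqrt ((n : ℝ) * δcov) * LS ≤ Real.log M ∧
      CodeExists π n M 1 K ε δcov δsec

/-- The covert secrecy capacity with key assistance. -/
def keyAssistedCovertSecrecyCapacity (π : Fin 2 → Matrix (B × W) (B × W) ℂ) : ℝ :=
  sSup {LS : ℝ | AchievableWithKey π LS}

open scoped MatrixOrder

section Trace

variable {ι : Type*} [Fintype ι] {A B P : Matrix ι ι ℂ}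

/-- The real part of the trace, as a real-linear functional. -/
def reTrace : Matrix ι ι ℂ →ₗ[ℝ] ℝ := Complex.reLm ∘ₗ traceLinearMap ι ℝ ℂ

lemma reTrace_apply (A : Matrix ι ι ℂ) : reTrace A = A.trace.re := rfl

lemma reTrace_mul_comm (A B : Matrix ι ι ℂ) : reTrace (A * B) = reTrace (B * A) := by
  rw [reTrace_apply, trace_mul_comm, reTrace_apply]

lemma reTrace_conjTranspose (A : Matrix ι ι ℂ) : reTrace Aᴴ = reTrace A := by
  simp [reTrace_apply, trace_conjTranspose]

lemma reTrace_nonneg (hA : 0 ≤ A) : 0 ≤ reTrace A :=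
  (Complex.le_def.1 (nonneg_iff_posSemidef.1 hA).trace_nonneg).1

lemma exists_mul_conjTranspose_eq (hA : 0 ≤ A) : ∃ Y : Matrix ι ι ℂ, Y * Yᴴ = A := by
  classical
  obtain ⟨X, hX⟩ := CStarAlgebra.nonneg_iff_eq_mul_star_self.1 hA
  exact ⟨X, hX.symm⟩

lemma reTrace_mul_nonneg (hA : 0 ≤ A) (hB : 0 ≤ B) : 0 ≤ reTrace (A * B) := by
  obtain ⟨Y, rfl⟩ := exists_mul_conjTranspose_eq hA
  rw [Matrix.mul_assoc, reTrace_mul_comm]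
  exact reTrace_nonneg (star_left_conjugate_nonneg hB Y)

lemma reTrace_mul_le_mul_left (hP : 0 ≤ P) (h : A ≤ B) : reTrace (P * A) ≤ reTrace (P * B) := by
  have := reTrace_mul_nonneg hP (sub_nonneg.2 h)
  rwa [Matrix.mul_sub, map_sub, sub_nonneg] at this

lemma reTrace_mul_le_mul_right (hP : 0 ≤ P) (h : A ≤ B) : reTrace (A * P) ≤ reTrace (B * P) := by
  rw [reTrace_mul_comm A, reTrace_mul_comm B]
  exact reTrace_mul_le_mul_left hP h

lemma reTrace_conjTranspose_mul_self_nonneg (A : Matrix ι ι ℂ) : 0 ≤ reTrace (Aᴴ * A) :=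
  reTrace_nonneg (star_mul_self_nonneg A)

lemma reTrace_conjTranspose_mul_self_eq_zero : reTrace (Aᴴ * A) = 0 ↔ A = 0 := by
  refine ⟨fun h => ?_, fun h => by simp [h]⟩
  have hnonneg := Complex.le_def.1 (posSemidef_conjTranspose_mul_self A).trace_nonneg
  exact trace_conjTranspose_mul_self_eq_zero_iff.1 (Complex.ext h hnonneg.2.symm)

end Trace

section Density

variable {ι : Type*} [Fintype ι] {ρ : Matrix ι ι ℂ}

lemma IsDensity.nonneg (hρ : IsDensity ρ) : 0 ≤ ρ := nonneg_iff_posSemidef.2 hρ.1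

lemma IsDensity.reTrace_eq_one (hρ : IsDensity ρ) : reTrace ρ = 1 := by
  rw [reTrace_apply, hρ.2, Complex.one_re]

lemma convex_setOf_isDensity : Convex ℝ {ρ : Matrix ι ι ℂ | IsDensity ρ} := by
  rintro ρ ⟨hρ, hρtr⟩ σ ⟨hσ, hσtr⟩ a b ha hb hab
  refine ⟨(hρ.smul ha).add (hσ.smul hb), ?_⟩
  rw [trace_add, trace_smul, trace_smul, hρtr, hσtr, ← add_smul, hab, one_smul]

end Density

section Support

variable {ι : Type*} [Fintype ι] {A B C X : Matrix ι ι ℂ}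

lemma SuppLE.mul_right_eq_zero (h : SuppLE A B) (hX : B * X = 0) : A * X = 0 := by
  ext i j
  exact congrFun (h (fun k => X k j) (funext fun k => congrFun (congrFun hX k) j)) i

lemma SuppLE.refl (A : Matrix ι ι ℂ) : SuppLE A A := fun _ => id

lemma SuppLE.add (hA : SuppLE A C) (hB : SuppLE B C) : SuppLE (A + B) C := fun v hv => by
  rw [add_mulVec, hA v hv, hB v hv, add_zero]

lemma SuppLE.smul (c : ℝ) (h : SuppLE A C) : SuppLE (c • A) C := fun v hv => by
  rw [smul_mulVec, h v hv, smul_zero]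

lemma SuppLE.sum {κ : Type*} {s : Finset κ} {A : κ → Matrix ι ι ℂ}
    (h : ∀ k ∈ s, SuppLE (A k) C) : SuppLE (∑ k ∈ s, A k) C := fun v hv => by
  rw [sum_mulVec]
  exact Finset.sum_eq_zero fun k hk => h k hk v hv

lemma SuppLE.of_le_smul {c : ℝ} (hA : 0 ≤ A) (h : A ≤ c • B) : SuppLE A B := fun v hv => by
  refine ((nonneg_iff_posSemidef.1 hA).dotProduct_mulVec_zero_iff v).1 (le_antisymm ?_ ?_)
  · have := (le_iff.1 h).dotProduct_mulVec_nonneg v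
    rwa [sub_mulVec, smul_mulVec, hv, smul_zero, zero_sub, dotProduct_neg,
      Left.nonneg_neg_iff] at this
  · exact (nonneg_iff_posSemidef.1 hA).dotProduct_mulVec_nonneg v

end Support

section Spectral

variable {ι : Type*} [Fintype ι] [DecidableEq ι]

/-- `d ↦ U diag(d) Uᴴ`: the real diagonal algebra in the orthonormal basis given by the columns
of `U`. Spectral decompositions are expressed through this homomorphism. -/
def spectralHom (U : unitaryGroup ι ℂ) : (ι → ℝ) →⋆ₐ[ℝ] Matrix ι ι ℂ where
  toFun d := U * diagonal (fun i => (d i : ℂ)) * star (U : Matrix ι ι ℂ)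
  map_one' := by simp
  map_mul' d e := by
    have h : star (U : Matrix ι ι ℂ) * U = 1 := Unitary.coe_star_mul_self U
    simp only [Pi.mul_apply, Complex.ofReal_mul, ← diagonal_mul_diagonal]
    simp only [Matrix.mul_assoc]
    rw [← Matrix.mul_assoc _ (U : Matrix ι ι ℂ), h, Matrix.one_mul]
  map_zero' := by simp
  map_add' d e := by
    simp only [Pi.add_apply, Complex.ofReal_add, ← diagonal_add, Matrix.mul_add, Matrix.add_mul]
  commutes' c := by
    simp only [Pi.algebraMap_apply, Algebra.algebraMap_self, RingHom.id_apply]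
    have h : (U : Matrix ι ι ℂ) * star (U : Matrix ι ι ℂ) = 1 := Unitary.coe_mul_star_self U
    rw [← smul_one_eq_diagonal, Algebra.algebraMap_eq_smul_one, Matrix.mul_smul, Matrix.smul_mul,
      Matrix.mul_one, h, Complex.coe_smul]
  map_star' d := by
    simp [star_eq_conjTranspose, Matrix.mul_assoc, diagonal_conjTranspose, Pi.star_def]

lemma spectralHom_apply (U : unitaryGroup ι ℂ) (d : ι → ℝ) :
    spectralHom U d = U * diagonal (fun i => (d i : ℂ)) * star (U : Matrix ι ι ℂ) := rfl

lemma spectralHom_nonneg (U : unitaryGroup ι ℂ) {d : ι → ℝ} (hd : 0 ≤ d) :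
    0 ≤ spectralHom U d := by
  refine star_right_conjugate_nonneg (nonneg_iff_posSemidef.2 (PosSemidef.diagonal fun i => ?_)) _
  exact Complex.zero_le_real.2 (hd i)

lemma spectralHom_mono (U : unitaryGroup ι ℂ) : Monotone (spectralHom U) := fun d e h => by
  simpa using spectralHom_nonneg U (sub_nonneg.2 h)

lemma isHermitian_spectralHom (U : unitaryGroup ι ℂ) (d : ι → ℝ) :
    (spectralHom U d).IsHermitian := (map_star (spectralHom U) d).symm

lemma exists_spectralHom_eq {A : Matrix ι ι ℂ} (hA : A.IsHermitian) :
    ∃ (U : unitaryGroup ι ℂ) (d : ι → ℝ), spectralHom U d = A :=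
  ⟨hA.eigenvectorUnitary, hA.eigenvalues, hA.spectral_theorem.symm⟩

lemma aeval_spectralHom (U : unitaryGroup ι ℂ) (d : ι → ℝ) (p : Polynomial ℝ) :
    Polynomial.aeval (spectralHom U d) p = spectralHom U (fun i => p.eval (d i)) := by
  rw [Polynomial.aeval_algHom_apply (spectralHom U) d p]
  congr 1
  ext i
  simp [Polynomial.aeval_def]

-- A polynomial interpolating `f` at both lists of eigenvalues reduces this to `aeval`.
lemma matFun_spectralHom (f : ℝ → ℝ) (U : unitaryGroup ι ℂ) (d : ι → ℝ) :
    matFun f (spectralHom U d) = spectralHom U (f ∘ d) := by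
  have hH := isHermitian_spectralHom U d
  set e := hH.eigenvalues
  have hspec : spectralHom hH.eigenvectorUnitary e = spectralHom U d := hH.spectral_theorem.symm
  let s := Finset.univ.image d ∪ Finset.univ.image e
  let p := Lagrange.interpolate s id f
  have hp : ∀ x ∈ s, p.eval x = f x := fun x hx =>
    Lagrange.eval_interpolate_at_node f Function.injective_id.injOn hx
  have hpd : (fun i => p.eval (d i)) = f ∘ d := funext fun i => hp _ (by simp [s])
  have hpe : (fun i => p.eval (e i)) = f ∘ e := funext fun i => hp _ (by simp [s])
  calc matFun f (spectralHom U d) = spectralHom hH.eigenvectorUnitary (f ∘ e) := by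
        rw [matFun, dif_pos hH]; rfl
    _ = spectralHom U (f ∘ d) := by
        rw [← hpe, ← hpd, ← aeval_spectralHom, ← aeval_spectralHom, hspec]

end Spectral

section Born

variable {ι : Type*} [Fintype ι] [DecidableEq ι] {A ρ : Matrix ι ι ℂ} {U V : unitaryGroup ι ℂ}

/-- The Born weight `⟨uᵢ, A uᵢ⟩` of `A` at the `i`-th column `uᵢ` of `U`: for a state `A`, the
outcome distribution of a measurement in that basis. -/
def bornWeight (U : unitaryGroup ι ℂ) (A : Matrix ι ι ℂ) (i : ι) : ℝ :=
  ((star (U : Matrix ι ι ℂ) * A * U) i i).re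

/-- The squared moduli of the entries of `Uᴴ X V`. For `X = 1` these are the transition
probabilities between the bases given by the columns of `U` and of `V`. -/
def transition (U : unitaryGroup ι ℂ) (X : Matrix ι ι ℂ) (V : unitaryGroup ι ℂ) (i j : ι) : ℝ :=
  Complex.normSq ((star (U : Matrix ι ι ℂ) * X * V) i j)

lemma bornWeight_nonneg (U : unitaryGroup ι ℂ) (hA : 0 ≤ A) (i : ι) : 0 ≤ bornWeight U A i :=
  (Complex.le_def.1 ((nonneg_iff_posSemidef.1
    (star_left_conjugate_nonneg hA (U : Matrix ι ι ℂ))).diag_nonneg (i := i))).1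

lemma transition_nonneg (U : unitaryGroup ι ℂ) (X : Matrix ι ι ℂ) (V : unitaryGroup ι ℂ)
    (i j : ι) : 0 ≤ transition U X V i j := Complex.normSq_nonneg _

lemma reTrace_spectralHom_mul (U : unitaryGroup ι ℂ) (d : ι → ℝ) (A : Matrix ι ι ℂ) :
    reTrace (spectralHom U d * A) = ∑ i, d i * bornWeight U A i := by
  have hcycle : reTrace (spectralHom U d * A) =
      reTrace (diagonal (fun i => (d i : ℂ)) *
        (star (U : Matrix ι ι ℂ) * A * (U : Matrix ι ι ℂ))) := by
    rw [spectralHom_apply, Matrix.mul_assoc, Matrix.mul_assoc, reTrace_mul_comm]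
    simp only [Matrix.mul_assoc]
  rw [hcycle, reTrace_apply, trace, Complex.re_sum]
  simp only [diag_apply, diagonal_mul, Complex.re_ofReal_mul, bornWeight]

lemma sum_bornWeight (U : unitaryGroup ι ℂ) (A : Matrix ι ι ℂ) :
    ∑ i, bornWeight U A i = reTrace A := by
  simpa using (reTrace_spectralHom_mul U 1 A).symm

lemma reTrace_spectralHom (U : unitaryGroup ι ℂ) (d : ι → ℝ) :
    reTrace (spectralHom U d) = ∑ i, d i := by
  have h : star (U : Matrix ι ι ℂ) * U = 1 := Unitary.coe_star_mul_self U
  simpa [bornWeight, h] using reTrace_spectralHom_mul U d 1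

lemma bornWeight_eq_reTrace (U : unitaryGroup ι ℂ) (A : Matrix ι ι ℂ) (i : ι) :
    bornWeight U A i = reTrace (spectralHom U (Pi.single i 1) * A) := by
  simp [reTrace_spectralHom_mul, Pi.single_apply]

lemma bornWeight_spectralHom (U : unitaryGroup ι ℂ) (d : ι → ℝ) :
    bornWeight U (spectralHom U d) = d := by
  ext i
  rw [bornWeight_eq_reTrace, ← map_mul, reTrace_spectralHom]
  simp [Pi.single_apply]

lemma reTrace_spectralHom_mul_conj (U V : unitaryGroup ι ℂ) (X : Matrix ι ι ℂ) (r s : ι → ℝ) :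
    reTrace (spectralHom U r * (X * spectralHom V s * Xᴴ)) =
      ∑ i, ∑ j, transition U X V i j * (r i * s j) := by
  rw [reTrace_spectralHom_mul]
  refine Finset.sum_congr rfl fun i _ => ?_
  set M := star (U : Matrix ι ι ℂ) * X * V with hM
  have hsandwich : star (U : Matrix ι ι ℂ) * (X * spectralHom V s * Xᴴ) * U =
      M * diagonal (fun j => (s j : ℂ)) * Mᴴ := by
    simp only [hM, spectralHom_apply, star_eq_conjTranspose, conjTranspose_mul,
      conjTranspose_conjTranspose, Matrix.mul_assoc]
  rw [bornWeight, hsandwich, mul_apply, Complex.re_sum, Finset.mul_sum]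
  refine Finset.sum_congr rfl fun j _ => ?_
  have hentry : M i j * (s j : ℂ) * Mᴴ j i = ((transition U X V i j * s j : ℝ) : ℂ) := by
    rw [conjTranspose_apply, mul_right_comm, Complex.star_def, Complex.mul_conj, transition,
      Complex.ofReal_mul]
  rw [mul_diagonal, hentry, Complex.ofReal_re]
  ring

lemma reTrace_spectralHom_mul_spectralHom (U V : unitaryGroup ι ℂ) (r s : ι → ℝ) :
    reTrace (spectralHom U r * spectralHom V s) =
      ∑ i, ∑ j, transition U 1 V i j * (r i * s j) := by
  simpa using reTrace_spectralHom_mul_conj U V 1 r s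

lemma sum_transition_mul_left (U V : unitaryGroup ι ℂ) (r : ι → ℝ) :
    ∑ i, ∑ j, transition U 1 V i j * r i = ∑ i, r i := by
  have h := reTrace_spectralHom_mul_spectralHom U V r 1
  simp only [map_one, mul_one, Pi.one_apply, reTrace_spectralHom] at h
  exact h.symm

lemma sum_transition_mul_right (U V : unitaryGroup ι ℂ) (s : ι → ℝ) :
    ∑ i, ∑ j, transition U 1 V i j * s j = ∑ j, s j := by
  have h := reTrace_spectralHom_mul_spectralHom U V 1 s
  simp only [map_one, one_mul, Pi.one_apply, reTrace_spectralHom] at h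
  exact h.symm

lemma exists_nonneg_spectralHom_eq (hA : 0 ≤ A) :
    ∃ (U : unitaryGroup ι ℂ) (d : ι → ℝ), 0 ≤ d ∧ spectralHom U d = A := by
  obtain ⟨U, d, rfl⟩ := exists_spectralHom_eq (nonneg_iff_posSemidef.1 hA).1
  refine ⟨U, d, fun i => ?_, rfl⟩
  simpa [bornWeight_spectralHom] using bornWeight_nonneg U hA i

lemma IsDensity.exists_spectralHom_eq (hρ : IsDensity ρ) :
    ∃ (U : unitaryGroup ι ℂ) (d : ι → ℝ), d ∈ stdSimplex ℝ ι ∧ spectralHom U d = ρ := by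
  obtain ⟨U, d, hd, rfl⟩ := exists_nonneg_spectralHom_eq hρ.nonneg
  exact ⟨U, d, ⟨hd, by rw [← reTrace_spectralHom U, hρ.reTrace_eq_one]⟩, rfl⟩

lemma le_reTrace_smul_one (hA : 0 ≤ A) : A ≤ reTrace A • (1 : Matrix ι ι ℂ) := by
  obtain ⟨U, d, hd, rfl⟩ := exists_nonneg_spectralHom_eq hA
  rw [← map_one (spectralHom U), ← map_smul, reTrace_spectralHom]
  refine spectralHom_mono U fun i => ?_
  simpa using Finset.single_le_sum (fun j _ => hd j) (Finset.mem_univ i)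

lemma SuppLE.bornWeight_eq_zero {s : ι → ℝ} (h : SuppLE A (spectralHom V s)) {j : ι}
    (hj : s j = 0) : bornWeight V A j = 0 := by
  have hzero : spectralHom V s * spectralHom V (Pi.single j 1) = 0 := by
    have : s * Pi.single j 1 = 0 := by ext i; by_cases hi : i = j <;> simp [hi, hj]
    rw [← map_mul, this, map_zero]
  rw [bornWeight_eq_reTrace, reTrace_mul_comm, h.mul_right_eq_zero hzero, map_zero]

lemma SuppLE.mul_spectralHom_support {s : ι → ℝ} (h : SuppLE A (spectralHom V s)) :
    A * spectralHom V (fun i => if s i = 0 then 0 else 1) = A := by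
  have hzero : spectralHom V s * (1 - spectralHom V fun i => if s i = 0 then 0 else 1) = 0 := by
    rw [← map_one (spectralHom V), ← map_sub, ← map_mul, ← map_zero (spectralHom V)]
    congr 1
    ext i
    by_cases hi : s i = 0 <;> simp [hi]
  have := h.mul_right_eq_zero hzero
  rwa [Matrix.mul_sub, Matrix.mul_one, sub_eq_zero, eq_comm] at this

lemma SuppLE.transition_eq_zero {r s : ι → ℝ} (hr : 0 ≤ r)
    (h : SuppLE (spectralHom U r) (spectralHom V s)) {i j : ι} (hj : s j = 0) (hi : r i ≠ 0) :
    transition U 1 V i j = 0 := by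
  have hsum : ∑ k, transition U 1 V k j * r k = 0 := by
    rw [← h.bornWeight_eq_zero hj, bornWeight_eq_reTrace, reTrace_mul_comm,
      reTrace_spectralHom_mul_spectralHom]
    simp [Pi.single_apply]
  have := (Finset.sum_eq_zero_iff_of_nonneg fun k _ =>
    mul_nonneg (transition_nonneg U 1 V k j) (hr k)).1 hsum i (Finset.mem_univ i)
  exact (mul_eq_zero.1 this).resolve_right hi

end Born

lemma SuppLE.exists_le_smul {ι : Type*} [Fintype ι] {A B : Matrix ι ι ℂ} (hA : 0 ≤ A) (hB : 0 ≤ B)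
    (h : SuppLE A B) :
    ∃ c : ℝ, 0 ≤ c ∧ A ≤ c • B := by
  classical
  obtain ⟨V, s, hs, rfl⟩ := exists_nonneg_spectralHom_eq hB
  set P := spectralHom V fun i => if s i = 0 then 0 else 1 with hP
  have hPstar : star P = P := isHermitian_spectralHom V _
  have hAP : A * P = A := h.mul_spectralHom_support
  have hPA : star P * A = A := by
    have := congrArg star hAP
    rwa [star_mul, (IsSelfAdjoint.of_nonneg hA).star_eq] at this
  have hPP : P * P = P := by
    rw [hP, ← map_mul]
    congr 1
    ext i
    by_cases hi : s i = 0 <;> simp [hi]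
  have hA_le : A ≤ reTrace A • P := by
    have := star_left_conjugate_le_conjugate (le_reTrace_smul_one hA) P
    rwa [hPA, hAP, hPstar, Matrix.mul_smul, Matrix.mul_one, Matrix.smul_mul, hPP] at this
  have hP_le : P ≤ (∑ j, (s j)⁻¹) • spectralHom V s := by
    rw [← map_smul]
    refine spectralHom_mono V fun i => ?_
    by_cases hi : s i = 0
    · simp [hi]
    · have := Finset.single_le_sum (f := fun j => (s j)⁻¹) (fun j _ => inv_nonneg.2 (hs j))
        (Finset.mem_univ i)
      simpa [hi] using mul_le_mul_of_nonneg_right this (hs i)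
  refine ⟨reTrace A * ∑ j, (s j)⁻¹, mul_nonneg (reTrace_nonneg hA)
    (Finset.sum_nonneg fun j _ => inv_nonneg.2 (hs j)), hA_le.trans ?_⟩
  rw [mul_smul]
  exact smul_le_smul_of_nonneg_left hP_le (reTrace_nonneg hA)

section RelativeEntropy

variable {ι : Type*} [Fintype ι] [DecidableEq ι] {ρ σ : Matrix ι ι ℂ} {U V : unitaryGroup ι ℂ}
  {r s : ι → ℝ}

lemma relEnt_eq_sub (ρ σ : Matrix ι ι ℂ) :
    relEnt ρ σ = reTrace (ρ * matLog ρ) - reTrace (ρ * matLog σ) := by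
  rw [← map_sub, ← Matrix.mul_sub]
  rfl

lemma relEnt_self (ρ : Matrix ι ι ℂ) : relEnt ρ ρ = 0 := by rw [relEnt_eq_sub, sub_self]

lemma reTrace_mul_matLog (A : Matrix ι ι ℂ) (V : unitaryGroup ι ℂ) (s : ι → ℝ) :
    reTrace (A * matLog (spectralHom V s)) = ∑ j, bornWeight V A j * Real.log (s j) := by
  rw [matLog, matFun_spectralHom, reTrace_mul_comm, reTrace_spectralHom_mul]
  exact Finset.sum_congr rfl fun j _ => mul_comm _ _

lemma relEnt_spectralHom (U V : unitaryGroup ι ℂ) (r s : ι → ℝ) :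
    relEnt (spectralHom U r) (spectralHom V s) =
      ∑ i, ∑ j, transition U 1 V i j * (r i * Real.log (r i) - r i * Real.log (s j)) := by
  rw [relEnt_eq_sub, matLog, matLog, matFun_spectralHom, matFun_spectralHom, ← map_mul,
    reTrace_spectralHom, reTrace_spectralHom_mul_spectralHom, ← sum_transition_mul_left U V]
  simp only [mul_sub, Finset.sum_sub_distrib, Pi.mul_apply, Function.comp_apply]

-- The transition probabilities reduce lower bounds on the relative entropy to scalar ones.
lemma sum_transition_mul_le_relEnt {φ : ℝ → ℝ → ℝ} (hr : r ∈ stdSimplex ℝ ι)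
    (hs : s ∈ stdSimplex ℝ ι) (h : SuppLE (spectralHom U r) (spectralHom V s))
    (hφ : ∀ x ∈ Set.Icc (0 : ℝ) 1, ∀ y ∈ Set.Icc (0 : ℝ) 1, (y = 0 → x = 0) →
      φ x y ≤ x * Real.log x - x * Real.log y) :
    ∑ i, ∑ j, transition U 1 V i j * φ (r i) (s j) ≤
      relEnt (spectralHom U r) (spectralHom V s) := by
  rw [relEnt_spectralHom]
  refine Finset.sum_le_sum fun i _ => Finset.sum_le_sum fun j _ => ?_
  by_cases hij : s j = 0 → r i = 0
  · exact mul_le_mul_of_nonneg_left (hφ _ (mem_Icc_of_mem_stdSimplex hr i) _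
      (mem_Icc_of_mem_stdSimplex hs j) hij) (transition_nonneg U 1 V i j)
  · obtain ⟨hj, hi⟩ := Classical.not_imp.1 hij
    simp [h.transition_eq_zero hr.1 hj hi]

lemma sq_sub_div_four_le_mul_log_sub {x y : ℝ} (hx : x ∈ Set.Icc (0 : ℝ) 1)
    (hy : y ∈ Set.Icc (0 : ℝ) 1) (hxy : y = 0 → x = 0) :
    (x - y) ^ 2 / 4 + x - y ≤ x * Real.log x - x * Real.log y := by
  rcases hx.1.eq_or_lt with rfl | hx0
  · nlinarith [hy.1, hy.2]
  have hy0 : 0 < y := hy.1.lt_of_ne fun h => hx0.ne' (hxy h.symm)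
  obtain ⟨a, ha, rfl⟩ : ∃ a, 0 < a ∧ a ^ 2 = x := ⟨√x, Real.sqrt_pos.2 hx0, Real.sq_sqrt hx.1⟩
  obtain ⟨b, hb, rfl⟩ : ∃ b, 0 < b ∧ b ^ 2 = y := ⟨√y, Real.sqrt_pos.2 hy0, Real.sq_sqrt hy.1⟩
  have ha1 : a ≤ 1 := (sq_le_one_iff₀ ha.le).1 hx.2
  have hb1 : b ≤ 1 := (sq_le_one_iff₀ hb.le).1 hy.2
  have hlog : a ^ 2 * (Real.log b - Real.log a) ≤ a * b - a ^ 2 :=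
    calc a ^ 2 * (Real.log b - Real.log a) = a ^ 2 * Real.log (b / a) := by
          rw [Real.log_div hb.ne' ha.ne']
      _ ≤ a ^ 2 * (b / a - 1) :=
          mul_le_mul_of_nonneg_left (Real.log_le_sub_one_of_pos (div_pos hb ha)) (sq_nonneg a)
      _ = a * b - a ^ 2 := by field_simp
  have hsq : (a ^ 2 - b ^ 2) ^ 2 ≤ 4 * (a - b) ^ 2 :=
    calc (a ^ 2 - b ^ 2) ^ 2 = (a + b) ^ 2 * (a - b) ^ 2 := by ring
      _ ≤ 4 * (a - b) ^ 2 := mul_le_mul_of_nonneg_right (by nlinarith) (sq_nonneg _)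
  rw [Real.log_pow, Real.log_pow]
  push_cast
  linarith

lemma reTrace_sq_sub_div_four_le_relEnt (hρ : IsDensity ρ) (hσ : IsDensity σ) (h : SuppLE ρ σ) :
    reTrace ((ρ - σ) * (ρ - σ)) / 4 ≤ relEnt ρ σ := by
  obtain ⟨U, r, hr, rfl⟩ := hρ.exists_spectralHom_eq
  obtain ⟨V, s, hs, rfl⟩ := hσ.exists_spectralHom_eq
  have hsq : reTrace ((spectralHom U r - spectralHom V s) * (spectralHom U r - spectralHom V s)) =
      ∑ i, ∑ j, transition U 1 V i j * (r i - s j) ^ 2 := by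
    have hexpand : (spectralHom U r - spectralHom V s) * (spectralHom U r - spectralHom V s) =
        spectralHom U (r * r) - spectralHom U r * spectralHom V s -
          spectralHom V s * spectralHom U r + spectralHom V (s * s) := by
      simp only [map_mul]
      noncomm_ring
    rw [hexpand, map_add, map_sub, map_sub, reTrace_mul_comm (spectralHom V s),
      reTrace_spectralHom, reTrace_spectralHom, reTrace_spectralHom_mul_spectralHom,
      ← sum_transition_mul_left U V (r * r), ← sum_transition_mul_right U V (s * s)]
    simp only [← Finset.sum_sub_distrib, ← Finset.sum_add_distrib, Pi.mul_apply]
    refine Finset.sum_congr rfl fun i _ => Finset.sum_congr rfl fun j _ => by ring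
  have hle := sum_transition_mul_le_relEnt hr hs h
    fun x hx y hy hxy => sq_sub_div_four_le_mul_log_sub hx hy hxy
  have hsplit : ∑ i, ∑ j, transition U 1 V i j * ((r i - s j) ^ 2 / 4 + r i - s j) =
      (∑ i, ∑ j, transition U 1 V i j * (r i - s j) ^ 2) / 4 +
        ∑ i, ∑ j, transition U 1 V i j * r i - ∑ i, ∑ j, transition U 1 V i j * s j := by
    simp only [mul_sub, mul_add, Finset.sum_sub_distrib, Finset.sum_add_distrib, Finset.sum_div,
      mul_div_assoc]
  rw [hsq]
  rw [hsplit, sum_transition_mul_left, sum_transition_mul_right, hr.2, hs.2] at hle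
  linarith

lemma relEnt_nonneg (hρ : IsDensity ρ) (hσ : IsDensity σ) (h : SuppLE ρ σ) : 0 ≤ relEnt ρ σ := by
  have hsq := reTrace_conjTranspose_mul_self_nonneg (ρ - σ)
  rw [(hρ.1.1.sub hσ.1.1).eq] at hsq
  linarith [reTrace_sq_sub_div_four_le_relEnt hρ hσ h]

end RelativeEntropy

section OneShotConverse

variable {ι : Type*} [Fintype ι] [DecidableEq ι] {T ρ σ : Matrix ι ι ℂ} {U V : unitaryGroup ι ℂ}
  {r s : ι → ℝ}

lemma mul_self_le_of_effect (hT : 0 ≤ T) (hT1 : T ≤ 1) : T * T ≤ T := by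
  have hTstar : star T = T := (IsSelfAdjoint.of_nonneg hT).star_eq
  have hsub : star (1 - T) = 1 - T := by rw [star_sub, star_one, hTstar]
  have h₁ := star_left_conjugate_nonneg (sub_nonneg.2 hT1) T
  have h₂ := star_left_conjugate_nonneg hT (1 - T)
  rw [hTstar] at h₁
  rw [hsub] at h₂
  have hsplit : T - T * T = T * (1 - T) * T + (1 - T) * T * (1 - T) := by noncomm_ring
  rw [← sub_nonneg, hsplit]
  exact add_nonneg h₁ h₂

lemma transition_one_le (U : unitaryGroup ι ℂ) (T : Matrix ι ι ℂ) (V : unitaryGroup ι ℂ) (i j : ι) :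
    transition U 1 V i j ≤ 2 * (transition U (1 - T) V i j + transition U T V i j) := by
  have hsplit : star (U : Matrix ι ι ℂ) * 1 * V =
      star (U : Matrix ι ι ℂ) * (1 - T) * V + star (U : Matrix ι ι ℂ) * T * V := by noncomm_ring
  simp only [transition, hsplit, Matrix.add_apply, Complex.normSq_eq_norm_sq]
  exact (pow_le_pow_left₀ (norm_nonneg _) (norm_add_le _ _) 2).trans add_sq_le

lemma sum_transition_effect_mul_left_le (hT : 0 ≤ T) (hT1 : T ≤ 1) (U V : unitaryGroup ι ℂ)
    (hr : 0 ≤ r) : ∑ i, ∑ j, transition U T V i j * r i ≤ reTrace (T * spectralHom U r) := by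
  have hTstar : Tᴴ = T := (IsSelfAdjoint.of_nonneg hT).star_eq
  have h := reTrace_spectralHom_mul_conj U V T r 1
  simp only [map_one, Pi.one_apply, mul_one, hTstar] at h
  rw [← h, reTrace_mul_comm T]
  exact reTrace_mul_le_mul_left (spectralHom_nonneg U hr) (mul_self_le_of_effect hT hT1)

lemma sum_transition_effect_mul_right_le (hT : 0 ≤ T) (hT1 : T ≤ 1) (U V : unitaryGroup ι ℂ)
    (hs : 0 ≤ s) : ∑ i, ∑ j, transition U T V i j * s j ≤ reTrace (T * spectralHom V s) := by
  have hTstar : Tᴴ = T := (IsSelfAdjoint.of_nonneg hT).star_eq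
  have h := reTrace_spectralHom_mul_conj U V T 1 s
  simp only [map_one, Pi.one_apply, one_mul, hTstar] at h
  rw [← h, reTrace_mul_comm, ← Matrix.mul_assoc]
  exact reTrace_mul_le_mul_right (spectralHom_nonneg V hs) (mul_self_le_of_effect hT hT1)

/- Audenaert–Nussbaum–Szkoła: the error of a quantum test dominates, up to a factor `2`, the error
of the classical test between `transition * r` and `transition * s`. -/
lemma sum_transition_mul_min_le (hT : 0 ≤ T) (hT1 : T ≤ 1) (U V : unitaryGroup ι ℂ) (hr : 0 ≤ r)
    (hs : 0 ≤ s) {c : ℝ} (hc : 0 ≤ c) :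
    ∑ i, ∑ j, transition U 1 V i j * min (r i) (c * s j) ≤
      2 * (reTrace ((1 - T) * spectralHom U r) + c * reTrace (T * spectralHom V s)) := by
  have hcompl := sum_transition_effect_mul_left_le (sub_nonneg.2 hT1) (sub_le_self 1 hT) U V hr
  have heff := sum_transition_effect_mul_right_le hT hT1 U V hs
  have hterm : ∀ i j, transition U 1 V i j * min (r i) (c * s j) ≤
      2 * (transition U (1 - T) V i j * r i + c * (transition U T V i j * s j)) := fun i j => by
    have h1 := mul_le_mul_of_nonneg_right (transition_one_le U T V i j)
      (le_min (hr i) (mul_nonneg hc (hs j)))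
    have h2 := mul_le_mul_of_nonneg_left (min_le_left (r i) (c * s j))
      (transition_nonneg U (1 - T) V i j)
    have h3 := mul_le_mul_of_nonneg_left (min_le_right (r i) (c * s j))
      (transition_nonneg U T V i j)
    linarith
  calc ∑ i, ∑ j, transition U 1 V i j * min (r i) (c * s j)
      ≤ ∑ i, ∑ j, 2 * (transition U (1 - T) V i j * r i + c * (transition U T V i j * s j)) :=
        Finset.sum_le_sum fun i _ => Finset.sum_le_sum fun j _ => hterm i j
    _ = 2 * (∑ i, ∑ j, transition U (1 - T) V i j * r i +
          c * ∑ i, ∑ j, transition U T V i j * s j) := by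
        simp only [Finset.mul_sum, Finset.sum_add_distrib, mul_add]
    _ ≤ _ := by gcongr

lemma mul_sub_min_sub_le_mul_log_sub {x y γ : ℝ} (hx : 0 ≤ x) (hy : 0 ≤ y) (hxy : y = 0 → x = 0)
    (hγ : 0 ≤ γ) :
    γ * (x - min x (Real.exp γ * y)) - y ≤ x * Real.log x - x * Real.log y := by
  rcases hx.eq_or_lt with rfl | hx0
  · rw [min_eq_left (by positivity)]
    simpa using hy
  have hy0 : 0 < y := hy.lt_of_ne fun h => hx0.ne' (hxy h.symm)
  rcases le_or_gt x (Real.exp γ * y) with hle | hgt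
  · have hlog := mul_le_mul_of_nonneg_left (Real.log_le_sub_one_of_pos (div_pos hy0 hx0)) hx
    rw [Real.log_div hy0.ne' hx0.ne', mul_sub, mul_sub, mul_div_cancel₀ _ hx0.ne'] at hlog
    rw [min_eq_left hle]
    linarith
  · have hlog : γ + Real.log y ≤ Real.log x := by
      rw [Real.le_log_iff_exp_le hx0, Real.exp_add, Real.exp_log hy0]
      exact hgt.le
    have hmul := mul_le_mul_of_nonneg_left hlog hx
    have : 0 ≤ γ * (Real.exp γ * y) := by positivity
    rw [min_eq_right hgt.le]
    linarith

lemma mul_one_sub_two_mul_sub_one_le_relEnt (hρ : IsDensity ρ) (hσ : IsDensity σ)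
    (h : SuppLE ρ σ) (hT : 0 ≤ T) (hT1 : T ≤ 1) {γ : ℝ} (hγ : 0 ≤ γ) :
    γ * (1 - 2 * (reTrace ((1 - T) * ρ) + Real.exp γ * reTrace (T * σ))) - 1 ≤ relEnt ρ σ := by
  obtain ⟨U, r, hr, rfl⟩ := hρ.exists_spectralHom_eq
  obtain ⟨V, s, hs, rfl⟩ := hσ.exists_spectralHom_eq
  have hle := sum_transition_mul_le_relEnt hr hs h
    fun x hx y hy hxy => mul_sub_min_sub_le_mul_log_sub hx.1 hy.1 hxy hγ
  have hsplit : ∑ i, ∑ j, transition U 1 V i j *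
        (γ * (r i - min (r i) (Real.exp γ * s j)) - s j) =
      γ * (∑ i, ∑ j, transition U 1 V i j * r i -
          ∑ i, ∑ j, transition U 1 V i j * min (r i) (Real.exp γ * s j)) -
        ∑ i, ∑ j, transition U 1 V i j * s j := by
    simp only [Finset.mul_sum, ← Finset.sum_sub_distrib]
    refine Finset.sum_congr rfl fun i _ => Finset.sum_congr rfl fun j _ => by ring
  rw [hsplit, sum_transition_mul_left, sum_transition_mul_right, hr.2, hs.2] at hle
  have hmin := mul_le_mul_of_nonneg_left
    (sum_transition_mul_min_le hT hT1 U V hr.1 hs.1 (Real.exp_pos γ).le) hγ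
  linarith

end OneShotConverse

section TensorProduct

variable {κ β : Type*} [Fintype κ]

/-- The tensor product `⨂ₖ Aₖ`, with rows and columns indexed by functions `κ → β`; `stringState`
and `tpow` are instances of it. -/
def piKronecker (A : κ → Matrix β β ℂ) : Matrix (κ → β) (κ → β) ℂ :=
  of fun a b => ∏ k, A k (a k) (b k)

lemma piKronecker_apply (A : κ → Matrix β β ℂ) (a b : κ → β) :
    piKronecker A a b = ∏ k, A k (a k) (b k) := rfl

lemma tpow_eq_piKronecker (ω : Matrix β β ℂ) (n : ℕ) :
    tpow ω n = piKronecker fun _ : Fin n => ω := rfl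

lemma stringState_eq_piKronecker {d n : ℕ} (ω : Fin d → Matrix β β ℂ) (x : Fin n → Fin d) :
    stringState ω x = piKronecker fun i => ω (x i) := rfl

lemma piKronecker_conjTranspose (A : κ → Matrix β β ℂ) :
    (piKronecker A)ᴴ = piKronecker fun k => (A k)ᴴ := by
  ext a b
  simp [piKronecker_apply]

lemma piKronecker_smul (c : κ → ℝ) (A : κ → Matrix β β ℂ) :
    piKronecker (fun k => c k • A k) = (∏ k, c k) • piKronecker A := by
  ext a b
  simp [piKronecker_apply, Finset.prod_mul_distrib]

lemma piKronecker_diagonal [DecidableEq β] (d : κ → β → ℂ) :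
    piKronecker (fun k => diagonal (d k)) = diagonal fun b => ∏ k, d k (b k) := by
  ext a b
  rcases eq_or_ne a b with rfl | hab
  · simp [piKronecker_apply]
  · obtain ⟨k, hk⟩ := Function.ne_iff.1 hab
    rw [diagonal_apply_ne _ hab]
    exact Finset.prod_eq_zero (Finset.mem_univ k) (diagonal_apply_ne _ hk)

lemma piKronecker_one [DecidableEq β] : piKronecker (fun _ : κ => (1 : Matrix β β ℂ)) = 1 := by
  simpa using piKronecker_diagonal fun (_ : κ) (_ : β) => (1 : ℂ)

lemma piKronecker_sum [DecidableEq κ] {τ : Type*} [Fintype τ] (A : κ → τ → Matrix β β ℂ) :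
    piKronecker (fun k => ∑ j, A k j) = ∑ y : κ → τ, piKronecker fun k => A k (y k) := by
  ext a b
  simp only [piKronecker_apply, Matrix.sum_apply, Finset.prod_univ_sum, Fintype.piFinset_univ]

lemma piKronecker_mul [DecidableEq κ] [Fintype β] (A B : κ → Matrix β β ℂ) :
    piKronecker A * piKronecker B = piKronecker fun k => A k * B k := by
  ext a b
  simp only [mul_apply, piKronecker_apply, ← Finset.prod_mul_distrib, Finset.prod_univ_sum,
    Fintype.piFinset_univ]

lemma piKronecker_nonneg [Finite β] {A : κ → Matrix β β ℂ} (h : ∀ k, 0 ≤ A k) :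
    0 ≤ piKronecker A := by
  classical
  have := Fintype.ofFinite β
  choose Y hY using fun k => exists_mul_conjTranspose_eq (h k)
  rw [← funext hY, ← piKronecker_mul, ← piKronecker_conjTranspose]
  exact mul_star_self_nonneg _

lemma piKronecker_mono [Finite β] {A B : κ → Matrix β β ℂ} (hA : ∀ k, 0 ≤ A k)
    (h : ∀ k, A k ≤ B k) : piKronecker A ≤ piKronecker B := by
  classical
  let C : κ → Bool → Matrix β β ℂ := fun k b => bif b then A k else B k - A k
  have hC : ∀ k b, 0 ≤ C k b := fun k b => b.rec (sub_nonneg.2 (h k)) (hA k)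
  calc piKronecker A = piKronecker fun k => C k true := rfl
    _ ≤ ∑ y : κ → Bool, piKronecker fun k => C k (y k) :=
        Finset.single_le_sum (f := fun y : κ → Bool => piKronecker fun k => C k (y k))
          (fun y _ => piKronecker_nonneg fun k => hC k (y k)) (Finset.mem_univ fun _ => true)
    _ = piKronecker B := by
        rw [← piKronecker_sum]
        congr 1
        funext k
        simp [C]

variable [DecidableEq κ] [Fintype β]

lemma sum_prod_mul_eval {p : κ → β → ℝ} (hp : ∀ k, ∑ c, p k c = 1) (i : κ) (g : β → ℝ) :
    ∑ b : κ → β, (∏ k, p k (b k)) * g (b i) = ∑ c, p i c * g c := by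
  have hfactor : ∀ b : κ → β, (∏ k, p k (b k)) * g (b i) =
      ∏ k, p k (b k) * if k = i then g (b k) else 1 := fun b => by
    rw [Finset.prod_mul_distrib, Finset.prod_ite_eq' Finset.univ i fun k => g (b k),
      if_pos (Finset.mem_univ i)]
  rw [Finset.sum_congr rfl fun b _ => hfactor b, ← Fintype.piFinset_univ,
    ← Finset.prod_univ_sum (fun _ => Finset.univ) fun k c => p k c * if k = i then g c else 1,
    Fintype.prod_eq_single i fun k hk => by simp [hk, hp]]
  simp

lemma trace_piKronecker (A : κ → Matrix β β ℂ) : (piKronecker A).trace = ∏ k, (A k).trace := by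
  simp only [trace, diag_apply, piKronecker_apply, Finset.prod_univ_sum, Fintype.piFinset_univ]

lemma isDensity_piKronecker {ρ : κ → Matrix β β ℂ} (h : ∀ k, IsDensity (ρ k)) :
    IsDensity (piKronecker ρ) :=
  ⟨nonneg_iff_posSemidef.1 (piKronecker_nonneg fun k => (h k).nonneg), by
    rw [trace_piKronecker, Finset.prod_eq_one fun k _ => (h k).2]⟩

lemma suppLE_piKronecker {ρ σ : κ → Matrix β β ℂ} (hρ : ∀ k, 0 ≤ ρ k) (hσ : ∀ k, 0 ≤ σ k)
    (h : ∀ k, SuppLE (ρ k) (σ k)) : SuppLE (piKronecker ρ) (piKronecker σ) := by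
  choose c _ hle using fun k => (h k).exists_le_smul (hρ k) (hσ k)
  refine SuppLE.of_le_smul (c := ∏ k, c k) (piKronecker_nonneg hρ) ?_
  rw [← piKronecker_smul]
  exact piKronecker_mono hρ hle

variable [DecidableEq β]

/-- The product basis: the unitary `⨂ₖ Uₖ`. -/
def piUnitary (U : κ → unitaryGroup β ℂ) : unitaryGroup (κ → β) ℂ :=
  ⟨piKronecker fun k => (U k : Matrix β β ℂ), by
    rw [mem_unitaryGroup_iff, star_eq_conjTranspose, piKronecker_conjTranspose, piKronecker_mul,
      ← piKronecker_one]
    exact congrArg piKronecker (funext fun k => mem_unitaryGroup_iff.1 (U k).2)⟩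

lemma coe_piUnitary (U : κ → unitaryGroup β ℂ) :
    (piUnitary U : Matrix (κ → β) (κ → β) ℂ) = piKronecker fun k => (U k : Matrix β β ℂ) := rfl

lemma piKronecker_spectralHom (U : κ → unitaryGroup β ℂ) (d : κ → β → ℝ) :
    piKronecker (fun k => spectralHom (U k) (d k)) =
      spectralHom (piUnitary U) fun b => ∏ k, d k (b k) := by
  simp only [spectralHom_apply, ← piKronecker_mul, piKronecker_diagonal, coe_piUnitary,
    star_eq_conjTranspose, piKronecker_conjTranspose, Complex.ofReal_prod]

lemma bornWeight_piUnitary (U : κ → unitaryGroup β ℂ) {A : κ → Matrix β β ℂ}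
    (hA : ∀ k, (A k).IsHermitian) (b : κ → β) :
    bornWeight (piUnitary U) (piKronecker A) b = ∏ k, bornWeight (U k) (A k) (b k) := by
  have hreal : ∀ k, (star (U k : Matrix β β ℂ) * A k * (U k : Matrix β β ℂ)) (b k) (b k) =
      (bornWeight (U k) (A k) (b k) : ℂ) := fun k =>
    ((isHermitian_conjTranspose_mul_mul (U k : Matrix β β ℂ) (hA k)).coe_re_apply_self (b k)).symm
  have hprod : star (piUnitary U : Matrix (κ → β) (κ → β) ℂ) * piKronecker A *
      (piUnitary U : Matrix (κ → β) (κ → β) ℂ) =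
      piKronecker fun k => star (U k : Matrix β β ℂ) * A k * (U k : Matrix β β ℂ) := by
    simp only [coe_piUnitary, star_eq_conjTranspose, piKronecker_conjTranspose, piKronecker_mul]
  rw [bornWeight, hprod, piKronecker_apply, Finset.prod_congr rfl fun k _ => hreal k,
    ← Complex.ofReal_prod, Complex.ofReal_re]

lemma reTrace_piKronecker_mul_matLog {ρ τ : κ → Matrix β β ℂ} (hρ : ∀ k, IsDensity (ρ k))
    (hτ : ∀ k, 0 ≤ τ k) (h : ∀ k, SuppLE (ρ k) (τ k)) :
    reTrace (piKronecker ρ * matLog (piKronecker τ)) = ∑ k, reTrace (ρ k * matLog (τ k)) := by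
  choose U t _ hU using fun k => exists_nonneg_spectralHom_eq (hτ k)
  obtain rfl : (fun k => spectralHom (U k) (t k)) = τ := funext hU
  have hlog : ∀ b : κ → β, (∏ k, bornWeight (U k) (ρ k) (b k)) * Real.log (∏ k, t k (b k)) =
      ∑ i, (∏ k, bornWeight (U k) (ρ k) (b k)) * Real.log (t i (b i)) := fun b => by
    by_cases hb : ∃ k, t k (b k) = 0
    · obtain ⟨k, hk⟩ := hb
      have hzero : ∏ k, bornWeight (U k) (ρ k) (b k) = 0 :=
        Finset.prod_eq_zero (Finset.mem_univ k) ((h k).bornWeight_eq_zero hk)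
      simp only [hzero, zero_mul, Finset.sum_const_zero]
    · push Not at hb
      rw [Real.log_prod fun k _ => hb k, Finset.mul_sum]
  simp only [piKronecker_spectralHom, reTrace_mul_matLog,
    bornWeight_piUnitary U fun k => (hρ k).1.1, hlog]
  rw [Finset.sum_comm]
  refine Finset.sum_congr rfl fun i _ => sum_prod_mul_eval (fun k => ?_) i fun c => Real.log (t i c)
  rw [sum_bornWeight, (hρ k).reTrace_eq_one]

lemma relEnt_piKronecker {ρ τ : κ → Matrix β β ℂ} (hρ : ∀ k, IsDensity (ρ k))
    (hτ : ∀ k, 0 ≤ τ k) (h : ∀ k, SuppLE (ρ k) (τ k)) :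
    relEnt (piKronecker ρ) (piKronecker τ) = ∑ k, relEnt (ρ k) (τ k) := by
  simp only [relEnt_eq_sub, Finset.sum_sub_distrib, reTrace_piKronecker_mul_matLog hρ hτ h,
    reTrace_piKronecker_mul_matLog hρ (fun k => (hρ k).nonneg) fun k => SuppLE.refl (ρ k)]

end TensorProduct

section Mixture

variable {β : Type*} {ω : Fin 2 → Matrix β β ℂ} {a : ℝ}

/-- The average output `a ω₁ + (1 - a) ω₀` of a channel whose input is `1` with probability `a`. -/
def mixture (ω : Fin 2 → Matrix β β ℂ) (a : ℝ) : Matrix β β ℂ := a • ω 1 + (1 - a) • ω 0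

lemma mixture_zero (ω : Fin 2 → Matrix β β ℂ) : mixture ω 0 = ω 0 := by simp [mixture]

lemma mixture_sub (ω : Fin 2 → Matrix β β ℂ) (a : ℝ) : mixture ω a - ω 0 = a • (ω 1 - ω 0) := by
  rw [mixture]
  module

lemma smul_le_mixture [Finite β] (hω : ∀ y, 0 ≤ ω y) (ha : a ∈ Set.Icc (0 : ℝ) 1) (y : Fin 2) :
    min a (1 - a) • ω y ≤ mixture ω a := by
  have := Fintype.ofFinite β
  have hone : min a (1 - a) • ω 1 ≤ a • ω 1 := smul_le_smul_of_nonneg_right (min_le_left _ _) (hω 1)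
  have hzero : min a (1 - a) • ω 0 ≤ (1 - a) • ω 0 :=
    smul_le_smul_of_nonneg_right (min_le_right _ _) (hω 0)
  fin_cases y
  · exact hzero.trans (le_add_of_nonneg_left (smul_nonneg ha.1 (hω 1)))
  · exact hone.trans (le_add_of_nonneg_right (smul_nonneg (sub_nonneg.2 ha.2) (hω 0)))

variable [Fintype β]

lemma reTrace_mixture_mul (ω : Fin 2 → Matrix β β ℂ) (a : ℝ) (X : Matrix β β ℂ) :
    reTrace (mixture ω a * X) = a * reTrace (ω 1 * X) + (1 - a) * reTrace (ω 0 * X) := by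
  simp only [mixture, Matrix.add_mul, smul_mul, map_add, map_smul, smul_eq_mul]

lemma isDensity_mixture (hω : ∀ y, IsDensity (ω y)) (ha : a ∈ Set.Icc (0 : ℝ) 1) :
    IsDensity (mixture ω a) :=
  convex_setOf_isDensity (hω 1) (hω 0) ha.1 (sub_nonneg.2 ha.2) (add_sub_cancel a 1)

lemma suppLE_mixture_zero (h : SuppLE (ω 1) (ω 0)) (a : ℝ) : SuppLE (mixture ω a) (ω 0) :=
  (h.smul a).add ((SuppLE.refl _).smul (1 - a))

lemma suppLE_mixture (hω : ∀ y, 0 ≤ ω y) (ha : a ∈ Set.Ioo (0 : ℝ) 1) (y : Fin 2) :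
    SuppLE (ω y) (mixture ω a) := by
  have hpos : 0 < min a (1 - a) := lt_min ha.1 (sub_pos.2 ha.2)
  refine SuppLE.of_le_smul (c := (min a (1 - a))⁻¹) (hω y) ?_
  rw [le_inv_smul_iff_of_pos hpos]
  exact smul_le_mixture hω (Set.Ioo_subset_Icc_self ha) y

lemma suppLE_zero (h : SuppLE (ω 1) (ω 0)) (y : Fin 2) : SuppLE (ω y) (ω 0) := by
  fin_cases y
  exacts [SuppLE.refl _, h]

lemma eventually_isDensity_mixture (hω : ∀ y, IsDensity (ω y)) (hs : SuppLE (ω 1) (ω 0)) :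
    ∀ᶠ a : ℝ in nhds 0, IsDensity (mixture ω a) := by
  obtain ⟨c, -, hle⟩ := hs.exists_le_smul (hω 1).nonneg (hω 0).nonneg
  have hlimit : Tendsto (fun a : ℝ => 1 - a + a * c) (nhds 0) (nhds 1) := by
    have : Continuous fun a : ℝ => 1 - a + a * c := by fun_prop
    simpa using this.tendsto 0
  filter_upwards [hlimit.eventually_const_lt one_pos, Iio_mem_nhds (zero_lt_one' ℝ)] with a hpos ha1
  rcases le_total 0 a with ha | ha
  · exact isDensity_mixture hω ⟨ha, ha1.le⟩
  · refine ⟨nonneg_iff_posSemidef.1 ?_, ?_⟩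
    · have hsplit : mixture ω a = (-a) • (c • ω 0 - ω 1) + (1 - a + a * c) • ω 0 := by
        rw [mixture]
        module
      rw [hsplit]
      exact add_nonneg (smul_nonneg (neg_nonneg.2 ha) (sub_nonneg.2 hle))
        (smul_nonneg hpos.le (hω 0).nonneg)
    · simp [mixture, (hω 1).2, (hω 0).2]

lemma sum_apply_eq_add_hammingNorm_mul {κ : Type*} [Fintype κ] (g : Fin 2 → ℝ) (x : κ → Fin 2) :
    ∑ k, g (x k) = Fintype.card κ * g 0 + hammingNorm x * (g 1 - g 0) := by
  have hletter : ∀ y : Fin 2, g y = g 0 + if y ≠ 0 then g 1 - g 0 else 0 := fun y => by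
    fin_cases y <;> simp
  rw [Finset.sum_congr rfl fun k _ => hletter (x k), Finset.sum_add_distrib, ← Finset.sum_filter]
  simp [hammingNorm, mul_sub]

end Mixture

section CovertConverse

variable {β κ T : Type*} [Fintype β] [DecidableEq β] [Fintype κ] [DecidableEq κ] [Fintype T]
  {ω : Fin 2 → Matrix β β ℂ} {ρ σ τ : Matrix β β ℂ}

-- The gap is `D(ρ‖τ) ≥ 0`.
lemma reTrace_mul_matLog_sub_le_relEnt (hρ : IsDensity ρ) (hτ : IsDensity τ) (h : SuppLE ρ τ) :
    reTrace (ρ * (matLog τ - matLog σ)) ≤ relEnt ρ σ := by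
  have := relEnt_nonneg hρ hτ h
  rw [relEnt_eq_sub] at this ⊢
  rw [Matrix.mul_sub, map_sub]
  linarith

lemma relEnt_mixture (ω : Fin 2 → Matrix β β ℂ) (a : ℝ) :
    relEnt (mixture ω a) (ω 0) =
      a * reTrace (ω 1 * (matLog (mixture ω a) - matLog (ω 0))) +
        (1 - a) * reTrace (ω 0 * (matLog (mixture ω a) - matLog (ω 0))) :=
  reTrace_mixture_mul ω a _

lemma relEnt_word (hω : ∀ y, IsDensity (ω y)) (h : SuppLE (ω 1) (ω 0)) (x : κ → Fin 2) :
    relEnt (piKronecker fun k => ω (x k)) (piKronecker fun _ : κ => ω 0) =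
      hammingNorm x * relEnt (ω 1) (ω 0) := by
  rw [relEnt_piKronecker (fun k => hω (x k)) (fun _ => (hω 0).nonneg) fun k => suppLE_zero h (x k),
    sum_apply_eq_add_hammingNorm_mul fun y => relEnt (ω y) (ω 0), relEnt_self]
  ring

lemma reTrace_word_mul_matLog_sub (hω : ∀ y, IsDensity (ω y)) (hτ : 0 ≤ τ) (hσ : 0 ≤ σ)
    (hωτ : ∀ y, SuppLE (ω y) τ) (hωσ : ∀ y, SuppLE (ω y) σ) (x : κ → Fin 2) :
    reTrace ((piKronecker fun k => ω (x k)) *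
        (matLog (piKronecker fun _ : κ => τ) - matLog (piKronecker fun _ : κ => σ))) =
      Fintype.card κ * reTrace (ω 0 * (matLog τ - matLog σ)) +
        hammingNorm x * (reTrace (ω 1 * (matLog τ - matLog σ)) -
          reTrace (ω 0 * (matLog τ - matLog σ))) := by
  rw [← sum_apply_eq_add_hammingNorm_mul fun y => reTrace (ω y * (matLog τ - matLog σ)),
    Matrix.mul_sub, map_sub,
    reTrace_piKronecker_mul_matLog (fun k => hω (x k)) (fun _ => hτ) fun k => hωτ (x k),
    reTrace_piKronecker_mul_matLog (fun k => hω (x k)) (fun _ => hσ) fun k => hωσ (x k),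
    ← Finset.sum_sub_distrib]
  simp only [Matrix.mul_sub, map_sub]

lemma card_mul_relEnt_mixture_le (hω : ∀ y, IsDensity (ω y)) (hs : SuppLE (ω 1) (ω 0)) {a : ℝ}
    (ha : a ∈ Set.Ioo (0 : ℝ) 1) {w : T → ℝ} (hw : w ∈ stdSimplex ℝ T) (x : T → κ → Fin 2)
    (hweight : Fintype.card κ * a ≤ ∑ t, w t * hammingNorm (x t)) :
    Fintype.card κ * relEnt (mixture ω a) (ω 0) ≤
      relEnt (∑ t, w t • piKronecker fun k => ω (x t k)) (piKronecker fun _ : κ => ω 0) := by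
  set τ := mixture ω a
  set ρ := ∑ t, w t • piKronecker fun k => ω (x t k)
  have hτ : IsDensity τ := isDensity_mixture hω (Set.Ioo_subset_Icc_self ha)
  have hρ : IsDensity ρ := convex_setOf_isDensity.sum_mem (fun t _ => hw.1 t) hw.2 fun t _ =>
    isDensity_piKronecker fun k => hω (x t k)
  have hlift : ∀ t, SuppLE (piKronecker fun k => ω (x t k)) (piKronecker fun _ : κ => τ) := fun t =>
    suppLE_piKronecker (fun k => (hω (x t k)).nonneg) (fun _ => hτ.nonneg)
      fun k => suppLE_mixture (fun y => (hω y).nonneg) ha (x t k)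
  set ℓ : Fin 2 → ℝ := fun y => reTrace (ω y * (matLog τ - matLog (ω 0)))
  have hletters : ∀ t, reTrace ((piKronecker fun k => ω (x t k)) *
      (matLog (piKronecker fun _ : κ => τ) - matLog (piKronecker fun _ : κ => ω 0))) =
      Fintype.card κ * ℓ 0 + hammingNorm (x t) * (ℓ 1 - ℓ 0) := fun t =>
    reTrace_word_mul_matLog_sub hω hτ.nonneg (hω 0).nonneg
      (suppLE_mixture (fun y => (hω y).nonneg) ha) (suppLE_zero hs) (x t)
  have hsplit : relEnt τ (ω 0) = a * ℓ 1 + (1 - a) * ℓ 0 := relEnt_mixture ω a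
  have hℓ : 0 ≤ ℓ 1 - ℓ 0 := by
    have hℓ0 : ℓ 0 ≤ 0 := (reTrace_mul_matLog_sub_le_relEnt (hω 0) hτ
      (suppLE_mixture (fun y => (hω y).nonneg) ha 0)).trans_eq (relEnt_self _)
    have := relEnt_nonneg hτ (hω 0) (suppLE_mixture_zero hs a)
    exact nonneg_of_mul_nonneg_right (by linarith : 0 ≤ a * (ℓ 1 - ℓ 0)) ha.1
  calc Fintype.card κ * relEnt τ (ω 0)
      = Fintype.card κ * ℓ 0 + Fintype.card κ * a * (ℓ 1 - ℓ 0) := by rw [hsplit]; ring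
    _ ≤ Fintype.card κ * ℓ 0 + (∑ t, w t * hammingNorm (x t)) * (ℓ 1 - ℓ 0) := by gcongr
    _ = ∑ t, w t * (Fintype.card κ * ℓ 0 + hammingNorm (x t) * (ℓ 1 - ℓ 0)) := by
        simp only [mul_add, Finset.sum_add_distrib, ← Finset.sum_mul, hw.2, one_mul, ← mul_assoc]
    _ = reTrace (ρ * (matLog (piKronecker fun _ : κ => τ) -
          matLog (piKronecker fun _ : κ => ω 0))) := by
        simp only [ρ, Finset.sum_mul, smul_mul, map_sum, map_smul, smul_eq_mul, hletters]
    _ ≤ relEnt ρ (piKronecker fun _ : κ => ω 0) :=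
        reTrace_mul_matLog_sub_le_relEnt hρ (isDensity_piKronecker fun _ => hτ)
          (SuppLE.sum fun t _ => (hlift t).smul (w t))

end CovertConverse

section PartialTrace

variable {α β : Type*} [Fintype α] [Fintype β] {ρ : Matrix (α × β) (α × β) ℂ}

lemma isDensity_ptraceRight (hρ : IsDensity ρ) : IsDensity (ptraceRight ρ) := by
  have hsum : ptraceRight ρ = ∑ b, ρ.submatrix (fun a => (a, b)) (fun a => (a, b)) := by
    ext a a'
    simp [ptraceRight, Matrix.sum_apply]
  refine ⟨hsum ▸ posSemidef_sum _ fun b _ => hρ.1.submatrix _, ?_⟩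
  rw [← hρ.2]
  simp [ptraceRight, trace, Fintype.sum_prod_type]

lemma isDensity_ptraceLeft (hρ : IsDensity ρ) : IsDensity (ptraceLeft ρ) := by
  have hsum : ptraceLeft ρ = ∑ a, ρ.submatrix (fun b => (a, b)) (fun b => (a, b)) := by
    ext b b'
    simp [ptraceLeft, Matrix.sum_apply]
  refine ⟨hsum ▸ posSemidef_sum _ fun a _ => hρ.1.submatrix _, ?_⟩
  rw [← hρ.2]
  simp [ptraceLeft, trace, Fintype.sum_prod_type_right]

end PartialTrace

section LogSeries

open FormalMultilinearSeries

variable {E : Type*} [NormedRing E] [NormedAlgebra ℝ E]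

/-- `-log (1 - X) = ∑ₙ Xⁿ / n` in a Banach algebra (the term `n = 0` vanishes as `0⁻¹ = 0`). -/
def negLogOneSub (X : E) : E := ofScalarsSum (fun n : ℕ => (n : ℝ)⁻¹) X

lemma one_le_radius_ofScalars_inv : 1 ≤ (ofScalars E fun n : ℕ => (n : ℝ)⁻¹).radius := by
  have hratio : Tendsto (fun n : ℕ => ‖((n.succ : ℕ) : ℝ)⁻¹‖ / ‖(n : ℝ)⁻¹‖) atTop
      (nhds ((1 : NNReal) : ℝ)) := by
    refine (tendsto_natCast_div_add_atTop (1 : ℝ)).congr fun n => ?_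
    rw [norm_inv, norm_inv, Real.norm_natCast, Real.norm_natCast, Nat.cast_succ]
    field_simp
  simpa using inv_le_ofScalars_radius_of_tendsto E _ one_ne_zero hratio

lemma mem_eball_radius {X : E} (hX : ‖X‖ < 1) :
    X ∈ Metric.eball (0 : E) (ofScalars E fun n : ℕ => (n : ℝ)⁻¹).radius := by
  refine Metric.mem_eball.2 (lt_of_lt_of_le ?_ one_le_radius_ofScalars_inv)
  rwa [edist_zero_right, ← ofReal_norm, ENNReal.ofReal_lt_one]

variable [CompleteSpace E]

lemma hasFPowerSeriesOnBall_negLogOneSub :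
    HasFPowerSeriesOnBall negLogOneSub (ofScalars E fun n : ℕ => (n : ℝ)⁻¹) 0
      (ofScalars E fun n : ℕ => (n : ℝ)⁻¹).radius :=
  (ofScalars E fun n : ℕ => (n : ℝ)⁻¹).hasFPowerSeriesOnBall
    (one_pos.trans_le one_le_radius_ofScalars_inv)

lemma analyticAt_negLogOneSub {X : E} (hX : ‖X‖ < 1) : AnalyticAt ℝ negLogOneSub X :=
  hasFPowerSeriesOnBall_negLogOneSub.analyticAt_of_mem (mem_eball_radius hX)

lemma hasSum_negLogOneSub {X : E} (hX : ‖X‖ < 1) :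
    HasSum (fun n : ℕ => (n : ℝ)⁻¹ • X ^ n) (negLogOneSub X) := by
  have h := hasFPowerSeriesOnBall_negLogOneSub.hasSum (mem_eball_radius hX)
  simpa only [ofScalars_apply_eq, zero_add] using h

end LogSeries

section Taylor

variable {β : Type*} [Fintype β] [DecidableEq β] {ω : Fin 2 → Matrix β β ℂ} {A P : Matrix β β ℂ}

open scoped Matrix.Norms.L2Operator

lemma norm_spectralHom_lt_one (U : unitaryGroup β ℂ) {d : β → ℝ} (hd : ∀ i, |d i| < 1) :
    ‖spectralHom U d‖ < 1 := by
  rw [spectralHom_apply, ← Unitary.coe_star, CStarRing.norm_mul_coe_unitary,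
    CStarRing.norm_coe_unitary_mul, l2_opNorm_diagonal, pi_norm_lt_iff one_pos]
  exact fun i => (Complex.norm_real (d i)).trans_lt (hd i)

lemma mul_sub_pow_of_mul_eq_self (h : A * P = A) (n : ℕ) : A * (P - A) ^ n = A * (1 - A) ^ n := by
  induction n with
  | zero => simp
  | succ n ih =>
    have hcomm : A * (1 - A) ^ n = (1 - A) ^ n * A :=
      ((Commute.one_right A).sub_right (Commute.refl A)).pow_right n
    rw [pow_succ, pow_succ, ← Matrix.mul_assoc, ← Matrix.mul_assoc, ih, hcomm, Matrix.mul_assoc,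
      Matrix.mul_assoc, Matrix.mul_sub A, Matrix.mul_sub A, h, Matrix.mul_one]

lemma hasSum_mul_one_sub_pow_div {x : ℝ} (hx : x ∈ Set.Icc (0 : ℝ) 1) :
    HasSum (fun n : ℕ => (n : ℝ)⁻¹ * (x * (1 - x) ^ n)) (-(x * Real.log x)) := by
  rcases hx.1.eq_or_lt with rfl | hpos
  · simp
  · have habs : |1 - x| < 1 := by rw [abs_lt]; constructor <;> linarith [hx.2]
    have h := (Real.hasSum_pow_div_log_of_abs_lt_one habs).mul_left x
    rw [sub_sub_cancel, mul_neg] at h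
    rw [← hasSum_nat_add_iff' 1]
    simpa [div_eq_inv_mul, mul_left_comm] using h

-- Multiplying by `A` turns the series of `-log (1 - (P - A))` into that of `-log A`, although `A`
-- itself may be singular.
lemma reTrace_mul_negLogOneSub (hA : IsDensity A) (hAP : A * P = A) (hnorm : ‖P - A‖ < 1) :
    reTrace (A * negLogOneSub (P - A)) = -reTrace (A * matLog A) := by
  let L : Matrix β β ℂ →L[ℝ] ℝ :=
    LinearMap.toContinuousLinearMap (reTrace ∘ₗ LinearMap.mulLeft ℝ A)
  have hseries : HasSum (fun n : ℕ => (n : ℝ)⁻¹ * reTrace (A * (1 - A) ^ n))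
      (reTrace (A * negLogOneSub (P - A))) := by
    have h := (hasSum_negLogOneSub hnorm).mapL L
    have hterm : ∀ n : ℕ, L ((n : ℝ)⁻¹ • (P - A) ^ n) = (n : ℝ)⁻¹ * reTrace (A * (1 - A) ^ n) :=
      fun n => by
        rw [map_smul, ← mul_sub_pow_of_mul_eq_self hAP]
        rfl
    simp only [hterm] at h
    exact h
  obtain ⟨V, d, hd, rfl⟩ := hA.exists_spectralHom_eq
  have hspec : ∀ n : ℕ, (n : ℝ)⁻¹ * reTrace (spectralHom V d * (1 - spectralHom V d) ^ n) =
      ∑ i, (n : ℝ)⁻¹ * (d i * (1 - d i) ^ n) := fun n => by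
    rw [← map_one (spectralHom V), ← map_sub, ← map_pow, ← map_mul, reTrace_spectralHom,
      Finset.mul_sum]
    rfl
  simp only [hspec] at hseries
  rw [hseries.unique (hasSum_sum fun i _ =>
    hasSum_mul_one_sub_pow_div (mem_Icc_of_mem_stdSimplex hd i)), reTrace_mul_matLog,
    bornWeight_spectralHom, Finset.sum_neg_distrib]

lemma exists_support_projection (hA : IsDensity A) :
    ∃ P : Matrix β β ℂ, ‖P - A‖ < 1 ∧ ∀ B : Matrix β β ℂ, SuppLE B A → B * P = B := by
  obtain ⟨U, s, hs, rfl⟩ := hA.exists_spectralHom_eq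
  refine ⟨spectralHom U fun i => if s i = 0 then 0 else 1, ?_, fun B hB =>
    hB.mul_spectralHom_support⟩
  rw [← map_sub]
  refine norm_spectralHom_lt_one U fun i => ?_
  obtain ⟨hs0, hs1⟩ := mem_Icc_of_mem_stdSimplex hs i
  rw [Pi.sub_apply]
  split_ifs with h
  · simp [h]
  · have := hs0.lt_of_ne' h
    rw [abs_lt]
    constructor <;> linarith

lemma analyticAt_relEnt_mixture (hω : ∀ y, IsDensity (ω y)) (hs : SuppLE (ω 1) (ω 0)) :
    AnalyticAt ℝ (fun a => relEnt (mixture ω a) (ω 0)) 0 := by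
  obtain ⟨P, hnorm, hP⟩ := exists_support_projection (hω 0)
  have hmix : AnalyticAt ℝ (mixture ω) 0 := by unfold mixture; fun_prop
  have hclose : ∀ᶠ a in nhds 0, ‖P - mixture ω a‖ < 1 := by
    have h := (hmix.continuousAt.tendsto.const_sub P).norm
    rw [mixture_zero] at h
    exact h.eventually_lt_const hnorm
  have hformula : ∀ᶠ a in nhds 0, -reTrace (mixture ω a * negLogOneSub (P - mixture ω a)) -
      reTrace (mixture ω a * matLog (ω 0)) = relEnt (mixture ω a) (ω 0) := by
    filter_upwards [hclose, eventually_isDensity_mixture hω hs] with a ha hdens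
    rw [reTrace_mul_negLogOneSub hdens (hP _ (suppLE_mixture_zero hs a)) ha, neg_neg, relEnt_eq_sub]
  have hreTrace : ∀ X : Matrix β β ℂ, AnalyticAt ℝ reTrace X := fun X =>
    (LinearMap.toContinuousLinearMap (reTrace : Matrix β β ℂ →ₗ[ℝ] ℝ)).analyticAt X
  have hlog : AnalyticAt ℝ (fun a => negLogOneSub (P - mixture ω a)) 0 := by
    refine (analyticAt_negLogOneSub ?_).comp (analyticAt_const.sub hmix)
    rwa [mixture_zero]
  exact (((hreTrace _).comp (hmix.mul hlog)).neg.sub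
    ((hreTrace _).comp (hmix.mul analyticAt_const))).congr hformula

lemma chiSq_eq_deriv_deriv (ω : Fin 2 → Matrix β β ℂ) :
    chiSq (ω 1) (ω 0) = deriv (deriv fun a => relEnt (mixture ω a) (ω 0)) 0 := by
  rw [chiSq, iteratedDeriv_succ, iteratedDeriv_one]
  rfl

lemma tendsto_relEnt_mixture_div_sq (hω : ∀ y, IsDensity (ω y)) (hs : SuppLE (ω 1) (ω 0)) :
    Tendsto (fun a => relEnt (mixture ω a) (ω 0) / a ^ 2) (nhdsWithin 0 {0}ᶜ)
      (nhds (chiSq (ω 1) (ω 0) / 2)) := by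
  set g : ℝ → ℝ := fun a => relEnt (mixture ω a) (ω 0) with hg
  have hg0 : g 0 = 0 := by simp only [hg, mixture_zero, relEnt_self]
  have han : AnalyticAt ℝ g 0 := analyticAt_relEnt_mixture hω hs
  have hderiv : deriv g 0 = 0 := by
    refine IsLocalMin.deriv_eq_zero ?_
    filter_upwards [eventually_isDensity_mixture hω hs] with a ha
    rw [hg0]
    exact relEnt_nonneg ha (hω 0) (suppLE_mixture_zero hs a)
  refine deriv.lhopital_zero_nhdsNE ?_ ?_ ?_ ?_ ?_
  · exact (han.eventually_analyticAt.filter_mono nhdsWithin_le_nhds).mono fun a h =>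
      h.differentiableAt
  · filter_upwards [self_mem_nhdsWithin] with a ha
    simpa using ha
  · simpa only [hg0] using han.continuousAt.tendsto.mono_left nhdsWithin_le_nhds
  · have : Continuous fun a : ℝ => a ^ 2 := by fun_prop
    simpa using (this.tendsto 0).mono_left nhdsWithin_le_nhds
  · have hslope := han.deriv.differentiableAt.hasDerivAt.tendsto_slope.div_const 2
    rw [← chiSq_eq_deriv_deriv] at hslope
    refine hslope.congr' ?_
    filter_upwards [self_mem_nhdsWithin] with a _
    simp only [slope_def_field, hderiv, sub_zero, differentiableAt_fun_id, deriv_fun_pow,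
      deriv_id'']
    field_simp
    ring

lemma chiSq_pos (hω : ∀ y, IsDensity (ω y)) (hs : SuppLE (ω 1) (ω 0)) (hne : ω 1 ≠ ω 0) :
    0 < chiSq (ω 1) (ω 0) := by
  have hsq : 0 < reTrace ((ω 1 - ω 0) * (ω 1 - ω 0)) := by
    have hH : (ω 1 - ω 0)ᴴ = ω 1 - ω 0 := (hω 1).1.1.sub (hω 0).1.1
    have h0 := reTrace_conjTranspose_mul_self_nonneg (ω 1 - ω 0)
    have h1 := mt reTrace_conjTranspose_mul_self_eq_zero.1 (sub_ne_zero.2 hne)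
    rw [hH] at h0 h1
    exact h0.lt_of_ne' h1
  have hle : reTrace ((ω 1 - ω 0) * (ω 1 - ω 0)) / 4 ≤ chiSq (ω 1) (ω 0) / 2 := by
    refine ge_of_tendsto (tendsto_relEnt_mixture_div_sq hω hs) ?_
    filter_upwards [(eventually_isDensity_mixture hω hs).filter_mono nhdsWithin_le_nhds,
      self_mem_nhdsWithin] with a ha hane
    have hpinsker := reTrace_sq_sub_div_four_le_relEnt ha (hω 0) (suppLE_mixture_zero hs a)
    rw [mixture_sub, smul_mul, Matrix.mul_smul, map_smul, map_smul, smul_eq_mul,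
      smul_eq_mul] at hpinsker
    have ha2 : 0 < a ^ 2 := sq_pos_of_ne_zero hane
    rw [le_div_iff₀ ha2]
    linarith
  linarith

end Taylor

section OneShotMessage

variable {ι T : Type*} [Fintype ι] [DecidableEq ι] [Fintype T] {Λ ρ : T → Matrix ι ι ℂ}
  {σ : Matrix ι ι ℂ}

lemma sum_reTrace_mul_le_one (hσ : IsDensity σ) (hΛ : ∑ t, Λ t ≤ 1) :
    ∑ t, reTrace (Λ t * σ) ≤ 1 := by
  have := reTrace_mul_le_mul_right hσ.nonneg hΛ
  rwa [Finset.sum_mul, map_sum, Matrix.one_mul, hσ.reTrace_eq_one] at this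

lemma card_mul_sub_le_sum_relEnt (hρ : ∀ t, IsDensity (ρ t)) (hσ : IsDensity σ)
    (h : ∀ t, SuppLE (ρ t) σ) (hΛ0 : ∀ t, 0 ≤ Λ t) (hΛ : ∑ t, Λ t ≤ 1) {γ : ℝ} (hγ : 0 ≤ γ) :
    Fintype.card T * (γ - 1) - 2 * γ * ∑ t, reTrace ((1 - Λ t) * ρ t) - 2 * γ * Real.exp γ ≤
      ∑ t, relEnt (ρ t) σ := by
  have hΛ1 : ∀ t, Λ t ≤ 1 := fun t =>
    (Finset.single_le_sum (fun s _ => hΛ0 s) (Finset.mem_univ t)).trans hΛ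
  have hσsum : 2 * γ * Real.exp γ * ∑ t, reTrace (Λ t * σ) ≤ 2 * γ * Real.exp γ :=
    mul_le_of_le_one_right (by positivity) (sum_reTrace_mul_le_one hσ hΛ)
  calc Fintype.card T * (γ - 1) - 2 * γ * ∑ t, reTrace ((1 - Λ t) * ρ t) - 2 * γ * Real.exp γ
      ≤ Fintype.card T * (γ - 1) - 2 * γ * ∑ t, reTrace ((1 - Λ t) * ρ t) -
          2 * γ * Real.exp γ * ∑ t, reTrace (Λ t * σ) := by linarith
    _ = ∑ t, (γ * (1 - 2 * (reTrace ((1 - Λ t) * ρ t) + Real.exp γ * reTrace (Λ t * σ))) - 1) := by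
        rw [← Finset.card_univ, ← nsmul_eq_mul, ← Finset.sum_const, Finset.mul_sum, Finset.mul_sum,
          ← Finset.sum_sub_distrib, ← Finset.sum_sub_distrib]
        exact Finset.sum_congr rfl fun t _ => by ring
    _ ≤ ∑ t, relEnt (ρ t) σ := Finset.sum_le_sum fun t _ =>
        mul_one_sub_two_mul_sub_one_le_relEnt (hρ t) hσ (h t) (hΛ0 t) (hΛ1 t) hγ

end OneShotMessage

section TraceNorm

variable {ι : Type*} [Fintype ι] [DecidableEq ι]

lemma traceNorm_spectralHom (U : unitaryGroup ι ℂ) (d : ι → ℝ) :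
    traceNorm (spectralHom U d) = ∑ i, |d i| := by
  have hsq : (spectralHom U d)ᴴ * spectralHom U d = spectralHom U (d * d) := by
    rw [(isHermitian_spectralHom U d).eq, map_mul]
  rw [traceNorm, hsq, matFun_spectralHom, ← reTrace_apply, reTrace_spectralHom]
  exact Finset.sum_congr rfl fun i _ => Real.sqrt_mul_self_eq_abs (d i)

lemma traceNorm_zero : traceNorm (0 : Matrix ι ι ℂ) = 0 := by
  rw [← map_zero (spectralHom (1 : unitaryGroup ι ℂ)), traceNorm_spectralHom]
  simp

lemma traceNorm_neg_of_isDensity {ρ : Matrix ι ι ℂ} (hρ : IsDensity ρ) : traceNorm (-ρ) = 1 := by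
  obtain ⟨U, d, hd, rfl⟩ := hρ.exists_spectralHom_eq
  rw [← map_neg, traceNorm_spectralHom, ← hd.2]
  exact Finset.sum_congr rfl fun i _ => by rw [Pi.neg_apply, abs_neg, abs_of_nonneg (hd.1 i)]

end TraceNorm

section CodeConverse

variable {B W : Type*} [Fintype B] [Fintype W] {π : Fin 2 → Matrix (B × W) (B × W) ℂ}
  {n M L K : ℕ} {f : Fin M → Fin L → Fin K → Fin n → Fin 2}
  {Λ : Fin K → Fin M → Fin L → Matrix (Fin n → B) (Fin n → B) ℂ}

/-- The average Hamming weight of the codewords of the encoder `f`; it controls both Bob's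
information and Willie's ability to detect the transmission. -/
def avgWeight (f : Fin M → Fin L → Fin K → Fin n → Fin 2) : ℝ :=
  ((M : ℝ) * L * K)⁻¹ * ∑ m, ∑ ℓ, ∑ k, (hammingNorm (f m ℓ k) : ℝ)

lemma isDensity_bobOut (hπ : ∀ x, IsDensity (π x)) (y : Fin 2) : IsDensity (bobOut π y) :=
  isDensity_ptraceRight (hπ y)

lemma isDensity_willieOut (hπ : ∀ x, IsDensity (π x)) (y : Fin 2) : IsDensity (willieOut π y) :=
  isDensity_ptraceLeft (hπ y)

lemma isDensity_bobWord (hπ : ∀ x, IsDensity (π x)) (x : Fin n → Fin 2) :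
    IsDensity (bobWord π x) := isDensity_piKronecker fun i => isDensity_bobOut hπ (x i)

lemma reTrace_one_sub_mul_bobWord [DecidableEq B] (hπ : ∀ x, IsDensity (π x))
    (T : Matrix (Fin n → B) (Fin n → B) ℂ) (x : Fin n → Fin 2) :
    reTrace ((1 - T) * bobWord π x) = 1 - ((T * bobWord π x).trace).re := by
  rw [Matrix.sub_mul, map_sub, Matrix.one_mul, (isDensity_bobWord hπ x).reTrace_eq_one,
    reTrace_apply]

lemma card_mul_sub_le_sum_hammingNorm_mul [DecidableEq B] {T : Type*} [Fintype T]
    {Λ : T → Matrix (Fin n → B) (Fin n → B) ℂ} (hπ : ∀ x, IsDensity (π x))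
    (hσ : SuppLE (bobOut π 1) (bobOut π 0)) (hΛ0 : ∀ t, 0 ≤ Λ t) (hΛ : ∑ t, Λ t ≤ 1)
    (x : T → Fin n → Fin 2) {γ : ℝ} (hγ : 0 ≤ γ) :
    Fintype.card T * (γ - 1) - 2 * γ * ∑ t, reTrace ((1 - Λ t) * bobWord π (x t)) -
        2 * γ * Real.exp γ ≤
      ∑ t, hammingNorm (x t) * relEnt (bobOut π 1) (bobOut π 0) :=
  (card_mul_sub_le_sum_relEnt (fun t => isDensity_bobWord hπ (x t))
    (isDensity_piKronecker fun _ : Fin n => isDensity_bobOut hπ 0)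
    (fun t => suppLE_piKronecker (fun i => (isDensity_bobOut hπ (x t i)).nonneg)
      (fun _ => (isDensity_bobOut hπ 0).nonneg) fun i => suppLE_zero hσ (x t i))
    hΛ0 hΛ hγ).trans_eq (Finset.sum_congr rfl fun t _ => relEnt_word (isDensity_bobOut hπ) hσ (x t))

lemma log_mul_sub_one_le_avgWeight_mul [DecidableEq B] (hπ : ∀ x, IsDensity (π x))
    (hσ : SuppLE (bobOut π 1) (bobOut π 0)) (hK : 0 < K) (hΛ : IsPOVM Λ) {ε : ℝ}
    (herr : avgErr π f Λ ≤ ε) (hε : 1 ≤ M * L * ε) :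
    Real.log (M * L * ε) * (1 - 4 * ε) - 1 ≤
      avgWeight f * relEnt (bobOut π 1) (bobOut π 0) := by
  set D := relEnt (bobOut π 1) (bobOut π 0)
  set γ := Real.log (M * L * ε)
  have hγ : 0 ≤ γ := Real.log_nonneg hε
  have hexp : Real.exp γ = M * L * ε := Real.exp_log (by linarith)
  have hMLK : (0 : ℝ) < M * L * K := by
    refine mul_pos ((by positivity : (0 : ℝ) ≤ M * L).lt_of_ne fun h => ?_) (Nat.cast_pos.2 hK)
    rw [← h, zero_mul] at hε
    linarith
  set e : Fin K → ℝ := fun k => ∑ t : Fin M × Fin L,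
    reTrace ((1 - Λ k t.1 t.2) * bobWord π (f t.1 t.2 k)) with he
  have hsum : ∑ k, e k ≤ M * L * K * ε := by
    rw [avgErr, inv_mul_le_iff₀ hMLK] at herr
    refine (Eq.le ?_).trans herr
    simp only [he, reTrace_one_sub_mul_bobWord hπ]
    rw [Finset.sum_comm, Fintype.sum_prod_type]
  have hkey : ∀ k, M * L * (γ - 1) - 2 * γ * e k - 2 * γ * (M * L * ε) ≤
      ∑ t : Fin M × Fin L, hammingNorm (f t.1 t.2 k) * D := fun k => by
    have := card_mul_sub_le_sum_hammingNorm_mul hπ hσ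
      (fun t : Fin M × Fin L => nonneg_iff_posSemidef.2 (hΛ.1 k t.1 t.2))
      (by rw [Fintype.sum_prod_type]; exact Matrix.le_iff.2 (hΛ.2 k)) (fun t => f t.1 t.2 k) hγ
    rwa [hexp, Fintype.card_prod, Fintype.card_fin, Fintype.card_fin, Nat.cast_mul] at this
  have hweight : ((M : ℝ) * L * K)⁻¹ *
      ∑ k, ∑ t : Fin M × Fin L, hammingNorm (f t.1 t.2 k) * D = avgWeight f * D := by
    rw [avgWeight, Finset.sum_comm, Fintype.sum_prod_type]
    simp only [← Finset.sum_mul, mul_assoc]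
  have htotal := Finset.sum_le_sum fun k (_ : k ∈ Finset.univ) => hkey k
  simp only [Finset.sum_sub_distrib, ← Finset.mul_sum, Finset.sum_const, Finset.card_univ,
    Fintype.card_fin, nsmul_eq_mul] at htotal
  rw [← hweight, le_inv_mul_iff₀ hMLK]
  have := mul_le_mul_of_nonneg_left hsum hγ
  linarith

lemma mul_relEnt_mixture_le_of_le_avgWeight [DecidableEq W] (hπ : ∀ x, IsDensity (π x))
    (hω : SuppLE (willieOut π 1) (willieOut π 0)) (hM : 0 < M) (hL : 0 < L) (hK : 0 < K) {a : ℝ}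
    (ha : a ∈ Set.Ioo (0 : ℝ) 1) (hweight : n * a ≤ avgWeight f) :
    n * relEnt (mixture (willieOut π) a) (willieOut π 0) ≤
      relEnt (willieAvg π f) (tpow (willieOut π 0) n) := by
  set w : Fin M × Fin L × Fin K → ℝ := fun _ => ((M : ℝ) * L * K)⁻¹ with hw
  have hsimplex : w ∈ stdSimplex ℝ (Fin M × Fin L × Fin K) := by
    refine ⟨fun _ => by positivity, ?_⟩
    simp only [hw, Finset.sum_const, Finset.card_univ, Fintype.card_prod, Fintype.card_fin,
      nsmul_eq_mul]
    push_cast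
    field_simp
  have havg : willieAvg π f =
      ∑ t, w t • piKronecker fun i => willieOut π (f t.1 t.2.1 t.2.2 i) := by
    rw [willieAvg, Complex.coe_smul, hw, ← Finset.smul_sum]
    simp only [Fintype.sum_prod_type]
    rfl
  rw [havg, tpow_eq_piKronecker]
  have := card_mul_relEnt_mixture_le (isDensity_willieOut hπ) hω ha hsimplex
    (fun t : Fin M × Fin L × Fin K => f t.1 t.2.1 t.2.2)
  simp only [Fintype.card_fin] at this
  refine this (hweight.trans_eq ?_)
  rw [avgWeight, hw, ← Finset.mul_sum]
  simp only [Fintype.sum_prod_type]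

lemma avgWeight_le_of_covert [DecidableEq W] (hπ : ∀ x, IsDensity (π x))
    (hω : SuppLE (willieOut π 1) (willieOut π 0)) (hM : 0 < M) (hL : 0 < L) (hK : 0 < K) {δ : ℝ}
    (hcov : Covert π f δ) {a : ℝ} (ha : a ∈ Set.Ioo (0 : ℝ) 1)
    (hδ : δ < n * relEnt (mixture (willieOut π) a) (willieOut π 0)) : avgWeight f ≤ n * a := by
  by_contra! hlt
  exact (mul_relEnt_mixture_le_of_le_avgWeight hπ hω hM hL hK ha hlt.le).not_gt
    (hcov.trans_lt hδ)

-- With no keys, the key-averaged states are the junk value `0`, far away from every state.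
lemma Secret.key_pos [DecidableEq W] {δ : ℝ} (h : Secret π f δ) (hδ : δ < 1) (hM : 0 < M) :
    0 < K := by
  refine Nat.pos_of_ne_zero fun hK => hδ.not_ge ?_
  obtain ⟨ρ, hρ, hle⟩ := h
  have hzero : ∀ m, willieMsg π f m = 0 := fun m => by simp [willieMsg, hK]
  simpa [hzero, traceNorm_neg_of_isDensity hρ, hM.ne'] using hle

end CodeConverse

section RateConverse

variable {B W : Type*} [Fintype B] [DecidableEq B] [Fintype W] [DecidableEq W]
  {π : Fin 2 → Matrix (B × W) (B × W) ℂ}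

lemma tendsto_sqrt_natCast_atTop : Tendsto (fun n : ℕ => √(n : ℝ)) atTop atTop :=
  Real.tendsto_sqrt_atTop.comp tendsto_natCast_atTop_atTop

lemma tendsto_natCast_mul_relEnt_mixture {ω : Fin 2 → Matrix W W ℂ} (hω : ∀ y, IsDensity (ω y))
    (hs : SuppLE (ω 1) (ω 0)) {p : ℕ → ℝ} {c : ℝ}
    (hp : Tendsto (fun n : ℕ => √n * p n) atTop (nhds c)) (hc : c ≠ 0) :
    Tendsto (fun n : ℕ => n * relEnt (mixture ω (p n)) (ω 0)) atTop
      (nhds (c ^ 2 * (chiSq (ω 1) (ω 0) / 2))) := by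
  have hp0 : Tendsto p atTop (nhdsWithin 0 {0}ᶜ) := by
    refine tendsto_nhdsWithin_iff.2 ⟨?_, (hp.eventually_ne hc).mono fun n => right_ne_zero_of_mul⟩
    refine (hp.div_atTop tendsto_sqrt_natCast_atTop).congr' ?_
    filter_upwards [eventually_gt_atTop 0] with n hn
    have : √(n : ℝ) ≠ 0 := by positivity
    exact mul_div_cancel_left₀ _ this
  refine ((hp.pow 2).mul ((tendsto_relEnt_mixture_div_sq hω hs).comp hp0)).congr' ?_
  filter_upwards [hp.eventually_ne hc] with n hn
  have hpn : p n ≠ 0 := right_ne_zero_of_mul hn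
  rw [Function.comp_apply, mul_pow, Real.sq_sqrt (Nat.cast_nonneg n)]
  field_simp

lemma CodeExists.log_mul_one_sub_le {n M K : ℕ} {ε δ δ' : ℝ} (hπ : ∀ x, IsDensity (π x))
    (hσ : SuppLE (bobOut π 1) (bobOut π 0)) (hω : SuppLE (willieOut π 1) (willieOut π 0))
    (h : CodeExists π n M 1 K ε δ δ') (hδ' : δ' < 1) {a : ℝ} (ha : a ∈ Set.Ioo (0 : ℝ) 1)
    (hδ : δ < n * relEnt (mixture (willieOut π) a) (willieOut π 0)) (hε : 0 < ε)
    (hMε : 1 ≤ M * ε) :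
    (Real.log M + Real.log ε) * (1 - 4 * ε) - 1 ≤ n * a * relEnt (bobOut π 1) (bobOut π 0) := by
  obtain ⟨f, Λ, hΛ, herr, hcov, hsec⟩ := h
  have hM : 0 < M := Nat.pos_of_ne_zero fun h0 => by
    rw [h0, Nat.cast_zero, zero_mul] at hMε
    exact zero_lt_one.not_ge hMε
  have hK : 0 < K := hsec.key_pos hδ' hM
  have hMε' : (M : ℝ) * (1 : ℕ) * ε = M * ε := by rw [Nat.cast_one, mul_one]
  have hbob := log_mul_sub_one_le_avgWeight_mul hπ hσ hK hΛ herr (hMε.trans_eq hMε'.symm)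
  rw [hMε', Real.log_mul (Nat.cast_pos.2 hM).ne' hε.ne'] at hbob
  refine hbob.trans (mul_le_mul_of_nonneg_right ?_
    (relEnt_nonneg (isDensity_bobOut hπ 1) (isDensity_bobOut hπ 0) hσ))
  exact avgWeight_le_of_covert hπ hω hM one_pos hK hcov ha hδ

lemma AchievableWithKey.mul_one_sub_le (hπ : ∀ x, IsDensity (π x))
    (hσ : SuppLE (bobOut π 1) (bobOut π 0)) (hω : SuppLE (willieOut π 1) (willieOut π 0))
    {LS : ℝ} (h : AchievableWithKey π LS) {c : ℝ} (hc : 0 < c)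
    (hχ : 1 < c ^ 2 * (chiSq (willieOut π 1) (willieOut π 0) / 2)) {ε : ℝ} (hε : 0 < ε)
    (hε4 : ε < 1 / 4) :
    LS * (1 - 4 * ε) ≤ c * relEnt (bobOut π 1) (bobOut π 0) := by
  obtain ⟨hLS, hcodes⟩ := h
  set D := relEnt (bobOut π 1) (bobOut π 0)
  have hscale : Tendsto (fun n : ℕ => √n * (c / √n)) atTop (nhds c) := by
    refine tendsto_const_nhds.congr' ?_
    filter_upwards [eventually_gt_atTop 0] with n hn
    have : √(n : ℝ) ≠ 0 := by positivity
    rw [mul_div_cancel₀ _ this]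
  have hfinite : ∀ᶠ n : ℕ in atTop,
      LS * (1 - 4 * ε) ≤ c * D + (1 - Real.log ε * (1 - 4 * ε)) / √n := by
    filter_upwards [hcodes ε 1 (1 / 2) hε one_pos one_half_pos,
      (tendsto_natCast_mul_relEnt_mixture (isDensity_willieOut hπ) hω hscale
        hc.ne').eventually_const_lt hχ,
      tendsto_sqrt_natCast_atTop.eventually_ge_atTop (-Real.log ε / LS),
      tendsto_sqrt_natCast_atTop.eventually_gt_atTop c, eventually_gt_atTop 0]
      with n ⟨M, K, hM, hcode⟩ hδ hlarge hcn hn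
    have hsqrt : 0 < √(n : ℝ) := by positivity
    rw [mul_one] at hM
    have hM0 : (M : ℝ) ≠ 0 := fun h0 => by
      rw [h0, Real.log_zero] at hM
      exact hM.not_gt (mul_pos hsqrt hLS)
    have hMε : 1 ≤ M * ε := by
      rw [← Real.log_nonneg_iff (by positivity), Real.log_mul hM0 hε.ne']
      rw [div_le_iff₀ hLS] at hlarge
      linarith
    have hbound := hcode.log_mul_one_sub_le hπ hσ hω one_half_lt_one
      ⟨by positivity, (div_lt_one hsqrt).2 hcn⟩ hδ hε hMε
    rw [mul_div_left_comm, Real.div_sqrt] at hbound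
    have := mul_le_mul_of_nonneg_right hM (by linarith : 0 ≤ 1 - 4 * ε)
    rw [← sub_le_iff_le_add', le_div_iff₀ hsqrt]
    linarith
  have hlimit : Tendsto (fun n : ℕ => c * D + (1 - Real.log ε * (1 - 4 * ε)) / √n) atTop
      (nhds (c * D)) := by
    simpa using (tendsto_const_nhds.div_atTop tendsto_sqrt_natCast_atTop).const_add (c * D)
  exact ge_of_tendsto hlimit hfinite

theorem AchievableWithKey.le_div_sqrt (hπ : ∀ x, IsDensity (π x))
    (hσ : SuppLE (bobOut π 1) (bobOut π 0)) (hω : SuppLE (willieOut π 1) (willieOut π 0))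
    (hχ : 0 < chiSq (willieOut π 1) (willieOut π 0)) {LS : ℝ} (h : AchievableWithKey π LS) :
    LS ≤ relEnt (bobOut π 1) (bobOut π 0) /
      √(2⁻¹ * chiSq (willieOut π 1) (willieOut π 0)) := by
  set χ := chiSq (willieOut π 1) (willieOut π 0)
  set D := relEnt (bobOut π 1) (bobOut π 0)
  set s := √(2⁻¹ * χ) with hs
  have hs0 : 0 < s := Real.sqrt_pos.2 (by positivity)
  have habove : ∀ c, s⁻¹ < c → LS ≤ c * D := fun c hc => by
    have hc0 : 0 < c := (inv_pos.2 hs0).trans hc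
    have hcχ : 1 < c ^ 2 * (χ / 2) := by
      have hcs : c ^ 2 * (χ / 2) = (c * s) ^ 2 := by
        rw [mul_pow, hs, Real.sq_sqrt (by positivity)]
        ring
      rw [hcs]
      exact one_lt_pow₀ ((inv_lt_iff_one_lt_mul₀ hs0).1 hc) two_ne_zero
    have hlimit : Tendsto (fun ε : ℝ => LS * (1 - 4 * ε)) (nhdsWithin 0 (Set.Ioi 0)) (nhds LS) := by
      have : Continuous fun ε : ℝ => LS * (1 - 4 * ε) := by fun_prop
      simpa using (this.tendsto 0).mono_left nhdsWithin_le_nhds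
    refine le_of_tendsto hlimit ?_
    filter_upwards [Ioo_mem_nhdsGT (show (0 : ℝ) < 1 / 4 by norm_num)] with ε hε
    exact h.mul_one_sub_le hπ hσ hω hc0 hcχ hε.1 hε.2
  have hlimit : Tendsto (fun c : ℝ => c * D) (nhdsWithin s⁻¹ (Set.Ioi s⁻¹)) (nhds (s⁻¹ * D)) :=
    ((continuous_mul_const D).tendsto _).mono_left nhdsWithin_le_nhds
  rw [div_eq_inv_mul]
  exact ge_of_tendsto hlimit (by filter_upwards [self_mem_nhdsWithin] with c hc using habove c hc)

end RateConverse

section SequentialTests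

lemma one_sub_mem_Icc {ι : Type*} [DecidableEq ι] {P : Matrix ι ι ℂ} (hP : P ∈ Set.Icc 0 1) :
    1 - P ∈ Set.Icc 0 1 := ⟨sub_nonneg.2 hP.2, sub_le_self 1 hP.1⟩

variable {ι : Type*} [Fintype ι] {C P Q ρ : Matrix ι ι ℂ} {B T : ℕ → Matrix ι ι ℂ}

-- `0 ≤ tr (Y - v/2)ᴴ C (Y - v/2)`.
lemma reTrace_conjTranspose_mul_mul_le (hC : 0 ≤ C) (Y v : Matrix ι ι ℂ) :
    reTrace (Yᴴ * C * v) ≤ reTrace (Yᴴ * C * Y) + reTrace (vᴴ * C * v) / 4 := by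
  have hsq := reTrace_nonneg (star_left_conjugate_nonneg hC (Y - (1 / 2 : ℝ) • v))
  have hexpand : star (Y - (1 / 2 : ℝ) • v) * C * (Y - (1 / 2 : ℝ) • v) =
      Yᴴ * C * Y - (1 / 2 : ℝ) • (Yᴴ * C * v) - (1 / 2 : ℝ) • (vᴴ * C * Y) +
        (1 / 4 : ℝ) • (vᴴ * C * v) := by
    rw [star_eq_conjTranspose, conjTranspose_sub, conjTranspose_smul, star_trivial]
    simp only [Matrix.sub_mul, Matrix.mul_sub, smul_mul, Matrix.mul_smul]
    module
  have hsymm : reTrace (vᴴ * C * Y) = reTrace (Yᴴ * C * v) := by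
    rw [← reTrace_conjTranspose]
    simp only [conjTranspose_mul, conjTranspose_conjTranspose,
      (nonneg_iff_posSemidef.1 hC).1.eq, Matrix.mul_assoc]
  rw [hexpand] at hsq
  simp only [map_add, map_sub, map_smul, smul_eq_mul, hsymm] at hsq
  linarith

variable [DecidableEq ι]

lemma conjTranspose_mul_self_mul_le (hP : P ∈ Set.Icc 0 1) (v : Matrix ι ι ℂ) :
    (P * v)ᴴ * (P * v) ≤ vᴴ * P * v := by
  rw [conjTranspose_mul, (nonneg_iff_posSemidef.1 hP.1).1.eq]
  simpa only [star_eq_conjTranspose, Matrix.mul_assoc] using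
    star_left_conjugate_le_conjugate (mul_self_le_of_effect hP.1 hP.2) v

/-- The product `Bₖ₋₁ ⋯ B₁ B₀`: it acts on a state as `k` successive tests, all of them passed. -/
def seqProd (B : ℕ → Matrix ι ι ℂ) : ℕ → Matrix ι ι ℂ
  | 0 => 1
  | k + 1 => B k * seqProd B k

lemma seqProd_congr {B' : ℕ → Matrix ι ι ℂ} {k : ℕ} (h : ∀ i < k, B i = B' i) :
    seqProd B k = seqProd B' k := by
  induction k with
  | zero => rfl
  | succ k ih =>
    rw [seqProd, seqProd, h k k.lt_succ_self, ih fun i hi => h i (hi.trans k.lt_succ_self)]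

lemma reTrace_mul_sub_seqProd_le (hB : ∀ i, B i ∈ Set.Icc 0 1) (Y : Matrix ι ι ℂ) (k : ℕ) :
    reTrace (Yᴴ * (Y - seqProd B k * Y)) ≤
      ∑ i ∈ Finset.range k, reTrace ((1 - B i) * (Y * Yᴴ)) +
        (reTrace (Yᴴ * Y) - reTrace ((seqProd B k * Y)ᴴ * (seqProd B k * Y))) / 4 := by
  induction k with
  | zero => simp [seqProd]
  | succ k ih =>
    set v := seqProd B k * Y
    have hnext : seqProd B (k + 1) * Y = B k * v := Matrix.mul_assoc _ _ _
    have hdist : reTrace (Yᴴ * (1 - B k) * v) ≤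
        reTrace ((1 - B k) * (Y * Yᴴ)) + reTrace (vᴴ * (1 - B k) * v) / 4 := by
      rw [← Matrix.mul_assoc _ Y, reTrace_mul_comm _ Yᴴ, ← Matrix.mul_assoc Yᴴ]
      exact reTrace_conjTranspose_mul_mul_le (one_sub_mem_Icc (hB k)).1 Y v
    have hloss : reTrace (vᴴ * (1 - B k) * v) ≤
        reTrace (vᴴ * v) - reTrace ((B k * v)ᴴ * (B k * v)) := by
      have := reTrace_nonneg (sub_nonneg.2 (conjTranspose_mul_self_mul_le (hB k) v))
      rw [map_sub] at this
      rw [Matrix.mul_sub, Matrix.sub_mul, Matrix.mul_one, map_sub]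
      linarith
    have hsplit : Yᴴ * (Y - B k * v) = Yᴴ * (Y - v) + Yᴴ * (1 - B k) * v := by noncomm_ring
    rw [hnext, Finset.sum_range_succ, hsplit, map_add]
    linarith

lemma quantum_union_bound (hB : ∀ i, B i ∈ Set.Icc 0 1) (hρ : IsDensity ρ) (k : ℕ) :
    1 - reTrace ((seqProd B k)ᴴ * seqProd B k * ρ) ≤
      4 * ∑ i ∈ Finset.range k, reTrace ((1 - B i) * ρ) := by
  obtain ⟨Y, rfl⟩ := exists_mul_conjTranspose_eq hρ.nonneg
  set v := seqProd B k * Y with hv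
  have hdist := reTrace_mul_sub_seqProd_le hB Y k
  have hsq := reTrace_conjTranspose_mul_self_nonneg (Y - v)
  have hexpand : (Y - v)ᴴ * (Y - v) = Yᴴ * (Y - v) - (vᴴ * Y - vᴴ * v) := by
    rw [conjTranspose_sub]
    noncomm_ring
  have hsymm : reTrace (vᴴ * Y) = reTrace (Yᴴ * v) := by
    rw [← reTrace_conjTranspose, conjTranspose_mul, conjTranspose_conjTranspose]
  have hone : reTrace (Yᴴ * Y) = 1 := by rw [reTrace_mul_comm, hρ.reTrace_eq_one]
  have hpass : reTrace ((seqProd B k)ᴴ * seqProd B k * (Y * Yᴴ)) = reTrace (vᴴ * v) := by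
    rw [← Matrix.mul_assoc, reTrace_mul_comm _ Yᴴ, hv, conjTranspose_mul]
    simp only [Matrix.mul_assoc]
  simp only [hexpand, Matrix.mul_sub, map_sub, hsymm, hone] at hdist hsq
  rw [hpass]
  linarith

/-- The sequential decoder for the tests `T`: outcome `i` occurs if the tests `0, …, i - 1` fail
and test `i` is the first to pass. -/
def seqDecoder (T : ℕ → Matrix ι ι ℂ) (i : ℕ) : Matrix ι ι ℂ :=
  (T i * seqProd (1 - T) i)ᴴ * (T i * seqProd (1 - T) i)

lemma seqDecoder_nonneg (T : ℕ → Matrix ι ι ℂ) (i : ℕ) : 0 ≤ seqDecoder T i :=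
  star_mul_self_nonneg _

lemma sum_seqDecoder_add_le_one (hT : ∀ i, T i ∈ Set.Icc 0 1) (k : ℕ) :
    ∑ i ∈ Finset.range k, seqDecoder T i + (seqProd (1 - T) k)ᴴ * seqProd (1 - T) k ≤ 1 := by
  induction k with
  | zero => simp [seqProd]
  | succ k ih =>
    set Q := seqProd (1 - T) k with hQ
    have hpass : seqDecoder T k ≤ Qᴴ * T k * Q := conjTranspose_mul_self_mul_le (hT k) Q
    have hfail : ((1 - T k) * Q)ᴴ * ((1 - T k) * Q) ≤ Qᴴ * (1 - T k) * Q :=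
      conjTranspose_mul_self_mul_le (one_sub_mem_Icc (hT k)) Q
    have hsplit : Qᴴ * T k * Q + Qᴴ * (1 - T k) * Q = Qᴴ * Q := by noncomm_ring
    calc ∑ i ∈ Finset.range (k + 1), seqDecoder T i +
          (seqProd (1 - T) (k + 1))ᴴ * seqProd (1 - T) (k + 1)
        = ∑ i ∈ Finset.range k, seqDecoder T i +
            (seqDecoder T k + ((1 - T k) * Q)ᴴ * ((1 - T k) * Q)) := by
          rw [Finset.sum_range_succ, add_assoc, hQ]
          rfl
      _ ≤ ∑ i ∈ Finset.range k, seqDecoder T i + Qᴴ * Q := by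
          rw [← hsplit]
          gcongr
      _ ≤ 1 := ih

lemma sum_seqDecoder_le_one (hT : ∀ i, T i ∈ Set.Icc 0 1) (k : ℕ) :
    ∑ i ∈ Finset.range k, seqDecoder T i ≤ 1 :=
  (le_add_of_nonneg_right (star_mul_self_nonneg _)).trans (sum_seqDecoder_add_le_one hT k)

lemma one_sub_reTrace_seqDecoder_mul_le (hT : ∀ i, T i ∈ Set.Icc 0 1) (hρ : IsDensity ρ) (m : ℕ) :
    1 - reTrace (seqDecoder T m * ρ) ≤
      4 * (reTrace ((1 - T m) * ρ) + ∑ i ∈ Finset.range m, reTrace (T i * ρ)) := by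
  set B := Function.update (1 - T) m (T m) with hB
  have hBm : B m = T m := Function.update_self _ _ _
  have hBi : ∀ i < m, B i = 1 - T i := fun i hi => Function.update_of_ne hi.ne _ _
  have heffect : ∀ i, B i ∈ Set.Icc 0 1 := fun i => by
    obtain rfl | hi := eq_or_ne i m
    · exact hBm ▸ hT i
    · rw [hB, Function.update_of_ne hi]
      exact one_sub_mem_Icc (hT i)
  have hprod : seqProd B (m + 1) = T m * seqProd (1 - T) m := by
    rw [seqProd, hBm, seqProd_congr hBi]
    rfl
  have hrejected : ∑ i ∈ Finset.range m, reTrace ((1 - B i) * ρ) =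
      ∑ i ∈ Finset.range m, reTrace (T i * ρ) := Finset.sum_congr rfl fun i hi => by
    rw [hBi i (Finset.mem_range.1 hi), sub_sub_cancel]
  have := quantum_union_bound heffect hρ (m + 1)
  rwa [hprod, Finset.sum_range_succ, hBm, hrejected, add_comm (Finset.sum _ _)] at this

lemma one_sub_reTrace_sandwich_mul_le (hP : P ∈ Set.Icc 0 1) (hQ : Q ∈ Set.Icc 0 1)
    (hQQ : Q * Q = Q) (hρ : IsDensity ρ) :
    1 - reTrace (P * Q * P * ρ) ≤ 4 * (reTrace ((1 - P) * ρ) + reTrace ((1 - Q) * ρ)) := by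
  set B : ℕ → Matrix ι ι ℂ := fun i => if i = 0 then P else Q
  have hB : ∀ i, B i ∈ Set.Icc 0 1 := fun i => by
    by_cases hi : i = 0
    · simpa only [B, if_pos hi] using hP
    · simpa only [B, if_neg hi] using hQ
  have hprod : (seqProd B 2)ᴴ * seqProd B 2 = P * Q * P := by
    have : seqProd B 2 = Q * P := by simp [seqProd, B]
    rw [this, conjTranspose_mul, (nonneg_iff_posSemidef.1 hP.1).1.eq,
      (nonneg_iff_posSemidef.1 hQ.1).1.eq, Matrix.mul_assoc, ← Matrix.mul_assoc Q, hQQ,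
      Matrix.mul_assoc]
  have := quantum_union_bound hB hρ 2
  rwa [hprod, Finset.sum_range_succ, Finset.sum_range_one] at this

lemma sandwich_mem_Icc (hP : 0 ≤ P) (hP1 : P * P ≤ 1) (hQ : Q ∈ Set.Icc 0 1) :
    P * Q * P ∈ Set.Icc 0 1 := by
  have hself : star P = P := (IsSelfAdjoint.of_nonneg hP).star_eq
  refine ⟨by simpa only [hself] using star_left_conjugate_nonneg hQ.1 P, ?_⟩
  have := star_left_conjugate_le_conjugate hQ.2 P
  rw [hself, Matrix.mul_one] at this
  exact this.trans hP1

end SequentialTests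

section TypicalSets

variable {κ β : Type*} {q f : β → ℝ} {t θ u : ℝ} {S : Finset κ}

lemma exists_sum_mul_exp_eq_exp_neg [Fintype β] {g : β → ℝ} (hq : q ∈ stdSimplex ℝ β)
    (ht : ∑ c, q c * g c < t) :
    ∃ θ u : ℝ, 0 < θ ∧ 0 < u ∧ ∑ c, q c * Real.exp (θ * (g c - t)) = Real.exp (-u) := by
  set φ : ℝ → ℝ := fun θ => ∑ c, q c * Real.exp (θ * (g c - t))
  have hzero : φ 0 = 1 := by simp [φ, hq.2]
  have hderiv : HasDerivAt φ (∑ c, q c * (g c - t)) 0 :=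
    HasDerivAt.fun_sum fun c _ => by
      simpa using ((((hasDerivAt_id (0 : ℝ)).mul_const (g c - t)).exp).const_mul (q c))
  have hneg : ∑ c, q c * (g c - t) < 0 := by
    simp only [_root_.mul_sub, Finset.sum_sub_distrib, ← Finset.sum_mul, hq.2]
    linarith
  obtain ⟨θ, hslope, hθ⟩ := (((hderiv.tendsto_slope.mono_left
    (nhdsGT_le_nhdsNE 0)).eventually_lt_const hneg).and self_mem_nhdsWithin).exists
  have hlt : φ θ < 1 := by
    rw [slope_def_field, hzero, sub_zero] at hslope
    linarith [(div_lt_iff₀ hθ).1 hslope]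
  have hpos : 0 < φ θ := by
    obtain ⟨c, -, hc⟩ := Finset.exists_ne_zero_of_sum_ne_zero (hq.2.trans_ne one_ne_zero)
    exact Finset.sum_pos' (fun c _ => mul_nonneg (hq.1 c) (Real.exp_pos _).le)
      ⟨c, Finset.mem_univ c, mul_pos ((hq.1 c).lt_of_ne' hc) (Real.exp_pos _)⟩
  exact ⟨θ, -Real.log (φ θ), hθ, neg_pos.2 (Real.log_neg hpos hlt), by
    rw [neg_neg, Real.exp_log hpos]⟩

/-- The strings on which the empirical mean over `S` of `log f` is at most `t`, in exponential form,
with `f` positive at every letter in `S`. -/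
def typicalSet (f : β → ℝ) (t : ℝ) (S : Finset κ) : Set (κ → β) :=
  {b | (∀ k ∈ S, 0 < f (b k)) ∧ ∏ k ∈ S, f (b k) ≤ Real.exp (S.card * t)}

lemma one_le_prod_exp_of_notMem_typicalSet {b : κ → β} (hf : ∀ k ∈ S, 0 < f (b k)) (hθ : 0 ≤ θ)
    (hb : b ∉ typicalSet f t S) :
    1 ≤ ∏ k ∈ S, Real.exp (θ * (Real.log (f (b k)) - t)) := by
  have hgt : Real.exp (S.card * t) < ∏ k ∈ S, f (b k) := not_le.1 fun h => hb ⟨hf, h⟩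
  have hlog : S.card * t ≤ ∑ k ∈ S, Real.log (f (b k)) := by
    rw [← Real.log_prod fun k hk => (hf k hk).ne']
    exact (Real.lt_log_iff_exp_lt (Finset.prod_pos hf)).2 hgt |>.le
  rw [← Real.exp_sum, Real.one_le_exp_iff, ← Finset.mul_sum, Finset.sum_sub_distrib,
    Finset.sum_const, nsmul_eq_mul]
  exact mul_nonneg hθ (sub_nonneg.2 hlog)

variable [Fintype κ] [DecidableEq κ] {p : κ → β → ℝ}

lemma indicator_compl_typicalSet_mul_prod_le (hp : ∀ k c, 0 ≤ p k c)
    (hpf : ∀ k ∈ S, ∀ c, p k c ≠ 0 → 0 < f c) (hθ : 0 ≤ θ) (b : κ → β) :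
    (typicalSet f t S)ᶜ.indicator 1 b * ∏ k, p k (b k) ≤
      ∏ k, p k (b k) * if k ∈ S then Real.exp (θ * (Real.log (f (b k)) - t)) else 1 := by
  have hweight : 0 ≤ ∏ k, p k (b k) := Finset.prod_nonneg fun k _ => hp k (b k)
  rw [Finset.prod_mul_distrib, Fintype.prod_ite_mem, mul_comm]
  have hprod : 0 ≤ ∏ k ∈ S, Real.exp (θ * (Real.log (f (b k)) - t)) :=
    Finset.prod_nonneg fun _ _ => (Real.exp_pos _).le
  by_cases hb : b ∈ typicalSet f t S
  · rw [Set.indicator_of_notMem (Set.notMem_compl_iff.2 hb), mul_zero]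
    exact mul_nonneg hweight hprod
  rw [Set.indicator_of_mem (Set.mem_compl hb), Pi.one_apply, mul_one]
  by_cases hpos : ∀ k ∈ S, p k (b k) ≠ 0
  · exact le_mul_of_one_le_right hweight (one_le_prod_exp_of_notMem_typicalSet
      (fun k hk => hpf k hk _ (hpos k hk)) hθ hb)
  · push Not at hpos
    obtain ⟨k, -, hk⟩ := hpos
    rw [Finset.prod_eq_zero (Finset.mem_univ k) hk, zero_mul]

lemma sum_indicator_compl_typicalSet_mul_prod_le [Fintype β] (hp : ∀ k, p k ∈ stdSimplex ℝ β)
    (hpS : ∀ k ∈ S, p k = q) (hqf : ∀ c, q c ≠ 0 → 0 < f c)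
    (hθ : 0 ≤ θ) (hmgf : ∑ c, q c * Real.exp (θ * (Real.log (f c) - t)) = Real.exp (-u)) :
    ∑ b : κ → β, (typicalSet f t S)ᶜ.indicator 1 b * ∏ k, p k (b k) ≤
      Real.exp (-(u * S.card)) := by
  have hfactor : ∀ k, (∑ c, p k c * if k ∈ S then Real.exp (θ * (Real.log (f c) - t)) else 1) =
      if k ∈ S then Real.exp (-u) else 1 := fun k => by
    by_cases hk : k ∈ S
    · simp only [if_pos hk, hpS k hk, hmgf]
    · simp only [if_neg hk, mul_one, (hp k).2]
  refine (Finset.sum_le_sum fun b _ => indicator_compl_typicalSet_mul_prod_le (fun k => (hp k).1)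
    (fun k hk => hpS k hk ▸ hqf) hθ b).trans_eq ?_
  rw [← Fintype.piFinset_univ, ← Finset.prod_univ_sum (fun _ => Finset.univ) fun k c =>
    p k c * if k ∈ S then Real.exp (θ * (Real.log (f c) - t)) else 1]
  simp only [hfactor, Fintype.prod_ite_mem, Finset.prod_const]
  rw [← Real.exp_nat_mul]
  congr 1
  ring

end TypicalSets

section SpectralProjection

variable {ι : Type*} [Fintype ι] [DecidableEq ι]

/-- The orthogonal projection onto the span of the columns of `U` with index in `T`. -/
def spectralProj (U : unitaryGroup ι ℂ) (T : Set ι) : Matrix ι ι ℂ := spectralHom U (T.indicator 1)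

lemma one_sub_spectralProj (U : unitaryGroup ι ℂ) (T : Set ι) :
    1 - spectralProj U T = spectralProj U Tᶜ := by
  rw [spectralProj, spectralProj, Set.indicator_compl, map_sub]
  exact congrArg (· - _) (map_one _).symm

lemma spectralProj_nonneg (U : unitaryGroup ι ℂ) (T : Set ι) : 0 ≤ spectralProj U T :=
  spectralHom_nonneg U (Set.indicator_nonneg fun _ _ => zero_le_one)

lemma spectralProj_mem_Icc (U : unitaryGroup ι ℂ) (T : Set ι) :
    spectralProj U T ∈ Set.Icc 0 1 :=
  ⟨spectralProj_nonneg U T, sub_nonneg.1 (one_sub_spectralProj U T ▸ spectralProj_nonneg U Tᶜ)⟩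

lemma spectralProj_mul_self (U : unitaryGroup ι ℂ) (T : Set ι) :
    spectralProj U T * spectralProj U T = spectralProj U T := by
  rw [spectralProj, ← map_mul, ← Set.inter_indicator_one, Set.inter_self]

end SpectralProjection

section ProductTests

variable {κ β : Type*} [Fintype κ] [DecidableEq κ] [Fintype β] [DecidableEq β]
  {ρ σ : Matrix β β ℂ} {S : Finset κ} {s : β → ℝ} {t : ℝ}

lemma bornWeight_mem_stdSimplex (U : unitaryGroup β ℂ) (hρ : IsDensity ρ) :
    bornWeight U ρ ∈ stdSimplex ℝ β :=
  ⟨bornWeight_nonneg U hρ.nonneg, by rw [sum_bornWeight, hρ.reTrace_eq_one]⟩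

lemma exists_reTrace_one_sub_typicalProj_mul_le (hρ : IsDensity ρ) (U : unitaryGroup β ℂ)
    {f : β → ℝ} (hf : ∀ c, bornWeight U ρ c ≠ 0 → 0 < f c)
    (ht : ∑ c, bornWeight U ρ c * Real.log (f c) < t) :
    ∃ u : ℝ, 0 < u ∧ ∀ (n : ℕ) (S : Finset (Fin n)) (V : Fin n → unitaryGroup β ℂ)
      (ξ : Fin n → Matrix β β ℂ), (∀ k, IsDensity (ξ k)) → (∀ k ∈ S, V k = U ∧ ξ k = ρ) →
      reTrace ((1 - spectralProj (piUnitary V) (typicalSet f t S)) * piKronecker ξ) ≤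
        Real.exp (-(u * S.card)) := by
  obtain ⟨θ, u, hθ, hu, hmgf⟩ :=
    exists_sum_mul_exp_eq_exp_neg (bornWeight_mem_stdSimplex U hρ) ht
  refine ⟨u, hu, fun n S V ξ hξ hS => ?_⟩
  rw [one_sub_spectralProj, spectralProj, reTrace_spectralHom_mul]
  simp only [bornWeight_piUnitary V fun k => (hξ k).1.1]
  refine sum_indicator_compl_typicalSet_mul_prod_le
    (fun k => bornWeight_mem_stdSimplex (V k) (hξ k)) (fun k hk => ?_) hf hθ.le hmgf
  rw [(hS k hk).1, (hS k hk).2]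

lemma typicalProj_le_smul_piKronecker (U : unitaryGroup β ℂ) {r : β → ℝ} (hr : 0 ≤ r) :
    spectralProj (piUnitary fun _ : κ => U) (typicalSet r⁻¹ t S) ≤
      Real.exp (S.card * t) • piKronecker (S.piecewise (fun _ => spectralHom U r) fun _ => 1) := by
  have hfactor : S.piecewise (fun _ => spectralHom U r) (fun _ => 1) =
      fun k => spectralHom U (S.piecewise (fun _ => r) (fun _ => 1) k) := by
    funext k
    by_cases hk : k ∈ S
    · simp only [Finset.piecewise_eq_of_mem _ _ _ hk]
    · simp only [Finset.piecewise_eq_of_notMem _ _ _ hk, map_one]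
  rw [hfactor, piKronecker_spectralHom, ← map_smul]
  refine spectralHom_mono _ fun b => ?_
  have hprod : ∏ k, S.piecewise (fun _ => r) (fun _ => 1) k (b k) = ∏ k ∈ S, r (b k) := by
    simp only [Finset.piecewise, ite_apply, Pi.one_apply, Fintype.prod_ite_mem]
  rw [Pi.smul_apply, smul_eq_mul, hprod]
  by_cases hb : b ∈ typicalSet r⁻¹ t S
  · have hpos : 0 < ∏ k ∈ S, r (b k) := Finset.prod_pos fun k hk => inv_pos.1 (hb.1 k hk)
    rw [Set.indicator_of_mem hb, Pi.one_apply, ← div_le_iff₀ hpos, one_div,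
      ← Finset.prod_inv_distrib]
    exact hb.2
  · rw [Set.indicator_of_notMem hb]
    exact mul_nonneg (Real.exp_pos _).le (Finset.prod_nonneg fun k _ => hr (b k))

lemma typicalProj_mul_piKronecker_mul_typicalProj_le (U : unitaryGroup β ℂ) {υ : κ → Matrix β β ℂ}
    (hυ : ∀ k, 0 ≤ υ k) :
    ∃ V : κ → unitaryGroup β ℂ, (∀ k ∈ S, V k = U) ∧
      spectralProj (piUnitary V) (typicalSet s t S) *
          piKronecker (S.piecewise (fun _ => spectralHom U s) υ) *
          spectralProj (piUnitary V) (typicalSet s t S) ≤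
        Real.exp (S.card * t) • piKronecker (S.piecewise (fun _ => 1) υ) := by
  choose Y v hv hY using fun k => exists_nonneg_spectralHom_eq (hυ k)
  obtain rfl : (fun k => spectralHom (Y k) (v k)) = υ := funext hY
  have hfactor : ∀ e : β → ℝ, (S.piecewise (fun _ => spectralHom U e)
      fun k => spectralHom (Y k) (v k)) = fun k => spectralHom (S.piecewise (fun _ => U) Y k)
        (S.piecewise (fun _ => e) v k) := fun e => by
    funext k
    by_cases hk : k ∈ S
    · simp only [Finset.piecewise_eq_of_mem _ _ _ hk]
    · simp only [Finset.piecewise_eq_of_notMem _ _ _ hk]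
  have hprod : ∀ (e : β → ℝ) (b : κ → β), ∏ k, S.piecewise (fun _ => e) v k (b k) =
      (∏ k ∈ S, e (b k)) * ∏ k ∈ Finset.univ \ S, v k (b k) := fun e b => by
    have := Finset.univ.prod_piecewise S (fun k => e (b k)) fun k => v k (b k)
    simpa only [Finset.piecewise, ite_apply, Finset.univ_inter] using this
  refine ⟨S.piecewise (fun _ => U) Y, fun k hk => Finset.piecewise_eq_of_mem _ _ _ hk, ?_⟩
  rw [← map_one (spectralHom U), hfactor, hfactor, piKronecker_spectralHom, piKronecker_spectralHom,
    spectralProj, ← map_mul, ← map_mul, ← map_smul]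
  refine spectralHom_mono _ fun b => ?_
  simp only [Pi.mul_apply, Pi.smul_apply, smul_eq_mul, hprod, Pi.one_apply, Finset.prod_const_one,
    one_mul]
  have hoff : 0 ≤ ∏ k ∈ Finset.univ \ S, v k (b k) := Finset.prod_nonneg fun k _ => hv k (b k)
  by_cases hb : b ∈ typicalSet s t S
  · simpa only [Set.indicator_of_mem hb, Pi.one_apply, one_mul, mul_one] using
      mul_le_mul_of_nonneg_right hb.2 hoff
  · simpa only [Set.indicator_of_notMem hb, mul_zero] using mul_nonneg (Real.exp_pos _).le hoff

lemma reTrace_sandwich_mul_le {ι : Type*} [Fintype ι] {P Q X Y Z R : Matrix ι ι ℂ}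
    {a b c : ℝ} (hP : 0 ≤ P) (hQ : 0 ≤ Q) (hY : 0 ≤ Y) (ha : 0 ≤ a) (hb : 0 ≤ b) (hX : X ≤ a • Z)
    (hPZ : P * Z * P ≤ b • Y) (hQR : Q ≤ c • R) :
    reTrace (P * Q * P * X) ≤ a * (b * (c * reTrace (R * Y))) := by
  classical
  have hPQP : 0 ≤ P * Q * P := by
    simpa only [(IsSelfAdjoint.of_nonneg hP).star_eq] using star_left_conjugate_nonneg hQ P
  have hcycle : reTrace (P * Q * P * Z) = reTrace (Q * (P * Z * P)) := by
    rw [Matrix.mul_assoc, Matrix.mul_assoc, reTrace_mul_comm]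
    simp only [Matrix.mul_assoc]
  calc reTrace (P * Q * P * X) ≤ reTrace (P * Q * P * (a • Z)) := reTrace_mul_le_mul_left hPQP hX
    _ = a * reTrace (Q * (P * Z * P)) := by rw [Matrix.mul_smul, map_smul, smul_eq_mul, hcycle]
    _ ≤ a * reTrace (Q * (b • Y)) := by gcongr; exact reTrace_mul_le_mul_left hQ hPZ
    _ = a * (b * reTrace (Q * Y)) := by rw [Matrix.mul_smul, map_smul, smul_eq_mul]
    _ ≤ a * (b * reTrace (c • R * Y)) := by gcongr; exact reTrace_mul_le_mul_right hY hQR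
    _ = a * (b * (c * reTrace (R * Y))) := by rw [Matrix.smul_mul, map_smul, smul_eq_mul]

lemma reTrace_typicalSandwich_mul_le {P Q : Matrix (κ → β) (κ → β) ℂ} {υ : κ → Matrix β β ℂ}
    {c t₀ t₁ : ℝ} (hρ : IsDensity ρ) (hυ : ∀ k, IsDensity (υ k))
    (hυS : ∀ k ∈ S, υ k ≤ Real.exp c • σ) (hP : 0 ≤ P) (hQ : 0 ≤ Q)
    (hPσ : P * piKronecker (S.piecewise (fun _ => σ) υ) * P ≤
      Real.exp (S.card * t₀) • piKronecker (S.piecewise (fun _ => 1) υ))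
    (hQρ : Q ≤ Real.exp (S.card * t₁) • piKronecker (S.piecewise (fun _ => ρ) fun _ => 1)) :
    reTrace (P * Q * P * piKronecker υ) ≤ Real.exp (S.card * (c + t₀ + t₁)) := by
  have hX : piKronecker υ ≤
      Real.exp (S.card * c) • piKronecker (S.piecewise (fun _ => σ) υ) := by
    have hscalar : ∏ k, (if k ∈ S then Real.exp c else 1) = Real.exp (S.card * c) := by
      rw [Fintype.prod_ite_mem, Finset.prod_const, Real.exp_nat_mul]
    rw [← hscalar, ← piKronecker_smul]
    refine piKronecker_mono (fun k => (hυ k).nonneg) fun k => ?_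
    by_cases hk : k ∈ S
    · simpa only [if_pos hk, Finset.piecewise_eq_of_mem _ _ _ hk] using hυS k hk
    · simp only [if_neg hk, Finset.piecewise_eq_of_notMem _ _ _ hk, one_smul, le_refl]
  have hY : 0 ≤ piKronecker (S.piecewise (fun _ => 1) υ) := piKronecker_nonneg fun k => by
    by_cases hk : k ∈ S
    · simp only [Finset.piecewise_eq_of_mem _ _ _ hk, zero_le_one]
    · simpa only [Finset.piecewise_eq_of_notMem _ _ _ hk] using (hυ k).nonneg
  have hRY : IsDensity (piKronecker (S.piecewise (fun _ => ρ) fun _ => 1) *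
      piKronecker (S.piecewise (fun _ => 1) υ)) := by
    rw [piKronecker_mul]
    refine isDensity_piKronecker fun k => ?_
    by_cases hk : k ∈ S
    · simpa only [Finset.piecewise_eq_of_mem _ _ _ hk, Matrix.mul_one] using hρ
    · simpa only [Finset.piecewise_eq_of_notMem _ _ _ hk, Matrix.one_mul] using hυ k
  refine (reTrace_sandwich_mul_le hP hQ hY (Real.exp_pos _).le (Real.exp_pos _).le hX hPσ
    hQρ).trans_eq ?_
  rw [hRY.reTrace_eq_one, mul_one, ← Real.exp_add, ← Real.exp_add]
  congr 1
  ring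

lemma exists_product_test (hρ : IsDensity ρ) (hσ : IsDensity σ) (h : SuppLE ρ σ) {η : ℝ}
    (hη : 0 < η) :
    ∃ u : ℝ, 0 < u ∧ ∀ (n : ℕ) (S : Finset (Fin n)) (ξ υ : Fin n → Matrix β β ℂ) (c : ℝ),
      (∀ k, IsDensity (ξ k)) → (∀ k, IsDensity (υ k)) → (∀ k ∈ S, ξ k = ρ) →
      (∀ k ∈ S, υ k ≤ Real.exp c • σ) → ∃ T ∈ Set.Icc (0 : Matrix (Fin n → β) _ ℂ) 1,
        reTrace ((1 - T) * piKronecker ξ) ≤ 8 * Real.exp (-(u * S.card)) ∧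
        reTrace (T * piKronecker υ) ≤ Real.exp (S.card * (c + 2 * η - relEnt ρ σ)) := by
  obtain ⟨U, r, hr, rfl⟩ := exists_nonneg_spectralHom_eq hρ.nonneg
  obtain ⟨X, s, hs, rfl⟩ := exists_nonneg_spectralHom_eq hσ.nonneg
  obtain ⟨u₁, hu₁, hreject₁⟩ := exists_reTrace_one_sub_typicalProj_mul_le hρ U (f := r⁻¹)
    (fun c hc => inv_pos.2 ((hr c).lt_of_ne' (bornWeight_spectralHom U r ▸ hc)))
    (lt_add_of_pos_right _ hη)
  obtain ⟨u₀, hu₀, hreject₀⟩ := exists_reTrace_one_sub_typicalProj_mul_le hρ X (f := s)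
    (fun c hc => (hs c).lt_of_ne' (mt h.bornWeight_eq_zero hc)) (lt_add_of_pos_right _ hη)
  set t₁ := ∑ c, bornWeight U (spectralHom U r) c * Real.log (r⁻¹ c) + η
  set t₀ := ∑ c, bornWeight X (spectralHom U r) c * Real.log (s c) + η
  have hrate : t₀ + t₁ = 2 * η - relEnt (spectralHom U r) (spectralHom X s) := by
    simp only [t₀, t₁, relEnt_eq_sub, reTrace_mul_matLog, Pi.inv_apply, Real.log_inv, mul_neg,
      Finset.sum_neg_distrib]
    ring
  refine ⟨min u₁ u₀, lt_min hu₁ hu₀, fun n S ξ υ c hξ hυ hξS hυS => ?_⟩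
  obtain ⟨V, hVS, hV⟩ := typicalProj_mul_piKronecker_mul_typicalProj_le (S := S) (s := s)
    (t := t₀) X fun k => (hυ k).nonneg
  set P := spectralProj (piUnitary V) (typicalSet s t₀ S)
  set Q := spectralProj (piUnitary fun _ => U) (typicalSet r⁻¹ t₁ S)
  have hP : P ∈ Set.Icc 0 1 := spectralProj_mem_Icc _ _
  have hQ : Q ∈ Set.Icc 0 1 := spectralProj_mem_Icc _ _
  refine ⟨P * Q * P, sandwich_mem_Icc hP.1 ((spectralProj_mul_self _ _).trans_le hP.2) hQ, ?_, ?_⟩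
  · have hξd := isDensity_piKronecker hξ
    have hexp : ∀ {v : ℝ}, min u₁ u₀ ≤ v →
        Real.exp (-(v * S.card)) ≤ Real.exp (-(min u₁ u₀ * S.card)) := fun hv => by gcongr
    have := one_sub_reTrace_sandwich_mul_le hP hQ (spectralProj_mul_self _ _) hξd
    rw [Matrix.sub_mul, map_sub, Matrix.one_mul, hξd.reTrace_eq_one]
    linarith [hreject₁ n S (fun _ => U) ξ hξ fun k hk => ⟨rfl, hξS k hk⟩,
      hreject₀ n S V ξ hξ fun k hk => ⟨hVS k hk, hξS k hk⟩, hexp (min_le_left u₁ u₀),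
      hexp (min_le_right u₁ u₀)]
  · refine (reTrace_typicalSandwich_mul_le hρ hυ hυS hP.1 hQ.1 hV
      (typicalProj_le_smul_piKronecker U hr)).trans_eq ?_
    rw [add_assoc, hrate, add_sub_assoc]

end ProductTests

section RandomCodebooks

open scoped BigOperators

variable {κ Ω V : Type*} [Fintype κ] [Fintype Ω]

lemma expect_eq_inv_card_smul_sum [AddCommGroup V] [Module ℝ V] [Module NNRat V] (F : Ω → V) :
    𝔼 o, F o = (Fintype.card Ω : ℝ)⁻¹ • ∑ o, F o := by
  rw [Finset.expect_univ, ← NNRat.cast_smul_eq_nnqsmul ℝ, NNRat.cast_inv, NNRat.cast_natCast]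

lemma reTrace_expect {β : Type*} [Fintype β] (A : Ω → Matrix β β ℂ) :
    reTrace (𝔼 o, A o) = 𝔼 o, reTrace (A o) := by
  rw [expect_eq_inv_card_smul_sum, expect_eq_inv_card_smul_sum, map_smul, map_sum]

lemma expect_prod [DecidableEq κ] (f : κ → Ω → ℝ) :
    𝔼 o : κ → Ω, ∏ k, f k (o k) = ∏ k, 𝔼 j, f k j := by
  simp only [Fintype.expect_eq_sum_div_card, Finset.prod_div_distrib, Finset.prod_const,
    Finset.card_univ, Fintype.card_fun, Nat.cast_pow]
  rw [Finset.prod_univ_sum, Fintype.piFinset_univ]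

lemma expect_piKronecker [DecidableEq κ] {β : Type*} (A : κ → Ω → Matrix β β ℂ) :
    𝔼 o : κ → Ω, piKronecker (fun k => A k (o k)) = piKronecker fun k => 𝔼 j, A k j := by
  simp only [expect_eq_inv_card_smul_sum]
  rw [piKronecker_smul, piKronecker_sum]
  simp

variable [DecidableEq κ] [Nonempty Ω] [AddCommMonoid V] [Module NNRat V]

lemma expect_expect_update (m : κ) (F : (κ → Ω) → V) :
    𝔼 k, 𝔼 o, F (Function.update k m o) = 𝔼 k, F k :=
  calc 𝔼 k, 𝔼 o, F (Function.update k m o)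
      = 𝔼 p : (κ → Ω) × Ω, F (Function.update p.1 m p.2) := (Finset.expect_product' _ _ _).symm
    _ = 𝔼 p : (κ → Ω) × Ω, F p.1 :=
        Finset.expect_nbij' (fun p => (Function.update p.1 m p.2, p.1 m))
          (fun p => (Function.update p.1 m p.2, p.1 m)) (by simp) (by simp) (by simp) (by simp)
          (by simp)
    _ = 𝔼 k, 𝔼 _o : Ω, F k := Finset.expect_product' _ _ fun k _ => F k
    _ = 𝔼 k, F k := by simp only [Fintype.expect_const]

lemma expect_eval (m : κ) (G : Ω → V) : 𝔼 k : κ → Ω, G (k m) = 𝔼 o, G o := by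
  rw [← expect_expect_update m]
  simp only [Function.update_self, Fintype.expect_const]

end RandomCodebooks

section RandomCodingError

open scoped BigOperators

variable {ι Ω : Type*} {M : ℕ} {ρ T : Ω → Matrix ι ι ℂ}

/-- The tests used to decode the codebook `k`: test `i` checks for the codeword `k i`, and the
tests beyond the last message never pass. -/
def codebookTests (T : Ω → Matrix ι ι ℂ) (k : Fin M → Ω) (i : ℕ) : Matrix ι ι ℂ :=
  if h : i < M then T (k ⟨i, h⟩) else 0

lemma codebookTests_mem_Icc [Finite ι] [DecidableEq ι] (hT : ∀ o, T o ∈ Set.Icc 0 1)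
    (k : Fin M → Ω) (i : ℕ) : codebookTests T k i ∈ Set.Icc 0 1 := by
  have := Fintype.ofFinite ι
  unfold codebookTests
  split_ifs
  exacts [hT _, ⟨le_rfl, zero_le_one⟩]

variable [Fintype ι] [Fintype Ω] [Nonempty Ω]

-- The codeword `k i` of a wrong message is independent of the codeword sent, so its test sees
-- the average output.
lemma expect_reTrace_codebookTests_mul_le {b : ℝ} (hfalse : ∀ o, reTrace (T o * 𝔼 o', ρ o') ≤ b)
    {i : ℕ} {m : Fin M} (him : i < m) :
    𝔼 k : Fin M → Ω, reTrace (codebookTests T k i * ρ (k m)) ≤ b := by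
  have hiM : i < M := him.trans m.2
  have hne : (⟨i, hiM⟩ : Fin M) ≠ m := Fin.ne_of_lt him
  rw [← expect_expect_update m]
  refine Finset.expect_le Finset.univ_nonempty fun k _ => ?_
  simp only [codebookTests, dif_pos hiM, Function.update_self, Function.update_of_ne hne]
  rw [← reTrace_expect, ← Finset.mul_expect]
  exact hfalse _

lemma expect_one_sub_reTrace_seqDecoder_mul_le [DecidableEq ι] (hρ : ∀ o, IsDensity (ρ o))
    (hT : ∀ o, T o ∈ Set.Icc 0 1) {a b : ℝ} (hb : 0 ≤ b)
    (hmiss : 𝔼 o, reTrace ((1 - T o) * ρ o) ≤ a)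
    (hfalse : ∀ o, reTrace (T o * 𝔼 o', ρ o') ≤ b) (m : Fin M) :
    𝔼 k : Fin M → Ω, (1 - reTrace (seqDecoder (codebookTests T k) m * ρ (k m))) ≤
      4 * (a + M * b) := by
  have htests : ∀ k : Fin M → Ω, codebookTests T k m = T (k m) := fun k => dif_pos m.2
  calc 𝔼 k : Fin M → Ω, (1 - reTrace (seqDecoder (codebookTests T k) m * ρ (k m)))
      ≤ 𝔼 k : Fin M → Ω, 4 * (reTrace ((1 - T (k m)) * ρ (k m)) +
          ∑ i ∈ Finset.range m, reTrace (codebookTests T k i * ρ (k m))) :=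
        Finset.expect_le_expect fun k _ => by
          simpa only [htests] using
            one_sub_reTrace_seqDecoder_mul_le (codebookTests_mem_Icc hT k) (hρ (k m)) m
    _ = 4 * (𝔼 o, reTrace ((1 - T o) * ρ o) +
          ∑ i ∈ Finset.range m, 𝔼 k : Fin M → Ω, reTrace (codebookTests T k i * ρ (k m))) := by
        rw [← Finset.mul_expect, Finset.expect_add_distrib, Finset.expect_sum_comm,
          expect_eval m fun o => reTrace ((1 - T o) * ρ o)]
    _ ≤ 4 * (a + ∑ _i ∈ Finset.range m, b) := by
        gcongr with i hi
        exact expect_reTrace_codebookTests_mul_le hfalse (Finset.mem_range.1 hi)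
    _ ≤ 4 * (a + M * b) := by
        rw [Finset.sum_const, Finset.card_range, nsmul_eq_mul]
        gcongr
        exact m.2.le

end RandomCodingError

section RandomWords

open scoped BigOperators

variable {κ V : Type*} [Fintype κ] [DecidableEq κ] {N a : ℕ}

/-- The binary word which has the letter `1` where `o` is less than `a`. For uniform `o` its
letters are independent and equal to `1` with probability `a / N`; it is the uniform distribution
on `o` that lets a key of finite size select codewords. -/
def sampleWord (a : ℕ) (o : κ → Fin N) (k : κ) : Fin 2 := if o k < a then 1 else 0

lemma expect_letter [AddCommGroup V] [Module ℝ V] [Module NNRat V] (hN : 0 < N) (ha : a ≤ N)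
    (g : Fin 2 → V) :
    𝔼 j : Fin N, g (if j < a then 1 else 0) = (a / N : ℝ) • g 1 + (1 - a / N : ℝ) • g 0 := by
  have hN' : (N : ℝ) ≠ 0 := Nat.cast_ne_zero.2 hN.ne'
  have hones : ({j : Fin N | j < a} : Finset (Fin N)).card = a := by
    rw [Fin.card_filter_val_lt, min_eq_right ha]
  have hzeros : ({j : Fin N | ¬ j < a} : Finset (Fin N)).card = N - a := by
    rw [Finset.filter_not, Finset.card_sdiff_of_subset (Finset.filter_subset _ _), hones,
      Finset.card_fin]
  simp only [apply_ite g]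
  rw [expect_eq_inv_card_smul_sum, Finset.sum_ite, Finset.sum_const, Finset.sum_const, hones,
    hzeros, Fintype.card_fin, ← Nat.cast_smul_eq_nsmul ℝ, ← Nat.cast_smul_eq_nsmul ℝ,
    Nat.cast_sub ha, smul_add, smul_smul, smul_smul, inv_mul_eq_div, inv_mul_eq_div, sub_div,
    div_self hN']

lemma expect_piKronecker_sampleWord {β : Type*} (hN : 0 < N) (ha : a ≤ N)
    (ω : Fin 2 → Matrix β β ℂ) :
    𝔼 o : κ → Fin N, piKronecker (fun k => ω (sampleWord a o k)) =
      piKronecker fun _ => mixture ω (a / N) := by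
  simp only [sampleWord]
  rw [expect_piKronecker fun _ (j : Fin N) => ω (if j < a then 1 else 0)]
  simp only [expect_letter hN ha, mixture]

lemma expect_exp_neg_mul_hammingNorm_le (hN : 0 < N) (ha : a ≤ N) {θ : ℝ}
    (hθ : θ ∈ Set.Icc (0 : ℝ) 1) :
    𝔼 o : κ → Fin N, Real.exp (-(θ * hammingNorm (sampleWord a o))) ≤
      Real.exp (Fintype.card κ * (a / N) * (θ ^ 2 - θ)) := by
  set g : Fin 2 → ℝ := fun y => Real.exp (-(θ * if y ≠ 0 then 1 else 0)) with hg
  have hprod : ∀ o : κ → Fin N, Real.exp (-(θ * hammingNorm (sampleWord a o))) =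
      ∏ k, g (if o k < a then 1 else 0) := fun o => by
    rw [hg, ← Real.exp_sum, Finset.sum_neg_distrib, ← Finset.mul_sum, Finset.sum_boole]
    rfl
  have hexp : Real.exp (-θ) ≤ 1 + (θ ^ 2 - θ) := by
    have := (abs_le.1 (Real.abs_exp_sub_one_sub_id_le (x := -θ)
      (by rw [abs_neg, abs_of_nonneg hθ.1]; exact hθ.2))).2
    linarith
  have hletter : 𝔼 j : Fin N, g (if j < a then 1 else 0) ≤
      Real.exp (a / N * (θ ^ 2 - θ)) := by
    rw [expect_letter hN ha]
    simp only [hg, ne_eq, one_ne_zero, not_false_eq_true, not_true, if_true, if_false, mul_one,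
      mul_zero, neg_zero, Real.exp_zero, smul_eq_mul]
    calc a / N * Real.exp (-θ) + (1 - a / N) ≤ a / N * (1 + (θ ^ 2 - θ)) + (1 - a / N) := by
          gcongr
      _ = a / N * (θ ^ 2 - θ) + 1 := by ring
      _ ≤ Real.exp (a / N * (θ ^ 2 - θ)) := Real.add_one_le_exp _
  have hnonneg : 0 ≤ 𝔼 j : Fin N, g (if j < a then 1 else 0) :=
    Finset.expect_nonneg fun _ _ => (Real.exp_pos _).le
  simp only [hprod]
  rw [expect_prod fun _ (j : Fin N) => g (if j < a then 1 else 0), Finset.prod_const,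
    Finset.card_univ, mul_assoc, Real.exp_nat_mul]
  gcongr

-- Chernoff's bound, with exponential parameter `η / 2`.
lemma expect_ite_hammingNorm_lt_le (hN : 0 < N) (ha : a ≤ N) {η : ℝ}
    (hη : η ∈ Set.Icc (0 : ℝ) 2) :
    𝔼 o : κ → Fin N, (if hammingNorm (sampleWord a o) < (1 - η) * (Fintype.card κ * (a / N) : ℝ)
      then (1 : ℝ) else 0) ≤ Real.exp (-(Fintype.card κ * (a / N) * η ^ 2 / 4)) := by
  set w : ℝ := Fintype.card κ * (a / N)
  have hθ : η / 2 ∈ Set.Icc (0 : ℝ) 1 := ⟨by linarith [hη.1], by linarith [hη.2]⟩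
  have hmarkov : ∀ o : κ → Fin N, (if hammingNorm (sampleWord a o) < (1 - η) * w
      then (1 : ℝ) else 0) ≤ Real.exp (η / 2 * ((1 - η) * w)) *
        Real.exp (-(η / 2 * hammingNorm (sampleWord a o))) := fun o => by
    rw [← Real.exp_add]
    split_ifs with hlt
    · rw [Real.one_le_exp_iff, ← sub_eq_add_neg, ← mul_sub]
      exact mul_nonneg hθ.1 (sub_nonneg.2 hlt.le)
    · exact (Real.exp_pos _).le
  refine (Finset.expect_le_expect fun o _ => hmarkov o).trans ?_
  rw [← Finset.mul_expect]
  refine (mul_le_mul_of_nonneg_left (expect_exp_neg_mul_hammingNorm_le hN ha hθ)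
    (Real.exp_pos _).le).trans_eq ?_
  rw [← Real.exp_add]
  congr 1
  ring

end RandomWords

section WordTests

open scoped BigOperators

variable {β : Type*} [Fintype β] {ω : Fin 2 → Matrix β β ℂ}

lemma exists_mixture_le_exp_smul (hω : ∀ y, 0 ≤ ω y) (h : SuppLE (ω 1) (ω 0)) :
    ∃ μ : ℝ, ∀ p : ℝ, 0 ≤ p → mixture ω p ≤ Real.exp (p * μ) • ω 0 := by
  obtain ⟨c, -, hc⟩ := h.exists_le_smul (hω 1) (hω 0)
  refine ⟨c - 1, fun p hp => ?_⟩
  calc mixture ω p ≤ p • (c • ω 0) + (1 - p) • ω 0 := by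
        rw [mixture]
        gcongr
    _ = (p * (c - 1) + 1) • ω 0 := by module
    _ ≤ Real.exp (p * (c - 1)) • ω 0 :=
        smul_le_smul_of_nonneg_right (Real.add_one_le_exp _) (hω 0)

variable [DecidableEq β]

lemma exists_word_test (hω : ∀ y, IsDensity (ω y)) (h : SuppLE (ω 1) (ω 0)) {η : ℝ}
    (hη : 0 < η) :
    ∃ u μ : ℝ, 0 < u ∧ ∀ (n : ℕ) (x : Fin n → Fin 2), ∀ p ∈ Set.Icc (0 : ℝ) 1,
      ∃ T ∈ Set.Icc (0 : Matrix (Fin n → β) _ ℂ) 1,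
        reTrace ((1 - T) * stringState ω x) ≤ 8 * Real.exp (-(u * hammingNorm x)) ∧
        reTrace (T * tpow (mixture ω p) n) ≤
          Real.exp (hammingNorm x * (p * μ + 2 * η - relEnt (ω 1) (ω 0))) := by
  obtain ⟨μ, hμ⟩ := exists_mixture_le_exp_smul (fun y => (hω y).nonneg) h
  obtain ⟨u, hu, htest⟩ := exists_product_test (hω 1) (hω 0) h hη
  refine ⟨u, μ, hu, fun n x p hp => ?_⟩
  exact htest n {i | x i ≠ 0} (fun i => ω (x i)) (fun _ => mixture ω p) (p * μ)
    (fun i => hω (x i)) (fun _ => isDensity_mixture hω hp)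
    (fun i hi => by rw [Fin.eq_one_of_ne_zero (x i) (Finset.mem_filter.1 hi).2])
    (fun _ _ => hμ p hp.1)

-- Words of small weight are always rejected, which makes the false acceptance probability
-- uniform over all words.
lemma exists_word_test_of_weight (hω : ∀ y, IsDensity (ω y)) (h : SuppLE (ω 1) (ω 0)) {η : ℝ}
    (hη : 0 < η) :
    ∃ u μ : ℝ, 0 < u ∧ ∀ (n : ℕ) (x : Fin n → Fin 2), ∀ p ∈ Set.Icc (0 : ℝ) 1,
      p * μ + 2 * η ≤ relEnt (ω 1) (ω 0) → ∀ w : ℝ,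
      ∃ T ∈ Set.Icc (0 : Matrix (Fin n → β) _ ℂ) 1,
        reTrace ((1 - T) * stringState ω x) ≤
          (if hammingNorm x < w then 1 else 0) + 8 * Real.exp (-(u * w)) ∧
        reTrace (T * tpow (mixture ω p) n) ≤
          Real.exp (w * (p * μ + 2 * η - relEnt (ω 1) (ω 0))) := by
  obtain ⟨u, μ, hu, htest⟩ := exists_word_test hω h hη
  refine ⟨u, μ, hu, fun n x p hp hrate w => ?_⟩
  split_ifs with hlt
  · refine ⟨0, ⟨le_rfl, zero_le_one⟩, ?_, ?_⟩
    · rw [sub_zero, Matrix.one_mul, stringState_eq_piKronecker,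
        (isDensity_piKronecker fun i => hω (x i)).reTrace_eq_one]
      exact le_add_of_nonneg_right (by positivity)
    · rw [Matrix.zero_mul, map_zero]
      positivity
  · obtain ⟨T, hT, hmiss, hfalse⟩ := htest n x p hp
    rw [not_lt] at hlt
    refine ⟨T, hT, hmiss.trans ?_, hfalse.trans ?_⟩
    · rw [zero_add]
      gcongr
    · exact Real.exp_le_exp.2 (mul_le_mul_of_nonpos_right hlt (by linarith))

lemma exists_decoder (hω : ∀ y, IsDensity (ω y)) (h : SuppLE (ω 1) (ω 0)) {η : ℝ}
    (hη : η ∈ Set.Ioc (0 : ℝ) 1) :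
    ∃ u μ : ℝ, 0 < u ∧ ∀ (n a M : ℕ), 0 < n → a ≤ n →
      a / n * μ + 2 * η ≤ relEnt (ω 1) (ω 0) →
      ∃ Λ : (Fin M → Fin n → Fin n) → Fin M → Matrix (Fin n → β) (Fin n → β) ℂ,
        (∀ k m, 0 ≤ Λ k m) ∧ (∀ k, ∑ m, Λ k m ≤ 1) ∧ ∀ m,
          𝔼 k, (1 - reTrace (Λ k m * stringState ω (sampleWord a (k m)))) ≤
            4 * (Real.exp (-(a * η ^ 2 / 4)) + 8 * Real.exp (-(u * ((1 - η) * a))) + M *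
              Real.exp ((1 - η) * a * (a / n * μ + 2 * η - relEnt (ω 1) (ω 0)))) := by
  obtain ⟨u, μ, hu, htest⟩ := exists_word_test_of_weight hω h hη.1
  refine ⟨u, μ, hu, fun n a M hn ha hrate => ?_⟩
  have hn' : (0 : ℝ) < n := Nat.cast_pos.2 hn
  have hp : (a / n : ℝ) ∈ Set.Icc (0 : ℝ) 1 :=
    ⟨by positivity, (div_le_one hn').2 (Nat.cast_le.2 ha)⟩
  have hweight : (Fintype.card (Fin n) * (a / n) : ℝ) = a := by
    rw [Fintype.card_fin, mul_div_cancel₀ _ hn'.ne']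
  have : Nonempty (Fin n → Fin n) := ⟨id⟩
  choose T hT hmiss hfalse using fun x => htest n x _ hp hrate ((1 - η) * a)
  have haverage : 𝔼 o : Fin n → Fin n, stringState ω (sampleWord a o) =
      tpow (mixture ω (a / n)) n := expect_piKronecker_sampleWord hn ha ω
  have hmissAvg : 𝔼 o : Fin n → Fin n,
      reTrace ((1 - T (sampleWord a o)) * stringState ω (sampleWord a o)) ≤
        Real.exp (-(a * η ^ 2 / 4)) + 8 * Real.exp (-(u * ((1 - η) * a))) := by
    have hlow := expect_ite_hammingNorm_lt_le (κ := Fin n) hn ha ⟨hη.1.le, hη.2.trans one_le_two⟩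
    rw [hweight] at hlow
    refine (Finset.expect_le_expect fun o _ => hmiss (sampleWord a o)).trans ?_
    rw [Finset.expect_add_distrib, Fintype.expect_const]
    gcongr
  refine ⟨fun k m => seqDecoder (codebookTests (fun o => T (sampleWord a o)) k) m,
    fun k m => seqDecoder_nonneg _ _, fun k => ?_, fun m => ?_⟩
  · rw [Fin.sum_univ_eq_sum_range fun i => seqDecoder _ i]
    exact sum_seqDecoder_le_one (codebookTests_mem_Icc (fun _ => hT _) k) M
  · exact expect_one_sub_reTrace_seqDecoder_mul_le (ρ := fun o => stringState ω (sampleWord a o))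
      (fun o => isDensity_piKronecker fun i => hω (sampleWord a o i)) (fun _ => hT _)
      (Real.exp_pos _).le hmissAvg (fun o => by rw [haverage]; exact hfalse _) m

end WordTests

section CodesFromCodebooks

open scoped BigOperators

variable {B W : Type*} [Fintype B] {π : Fin 2 → Matrix (B × W) (B × W) ℂ} {n M L K : ℕ}

lemma avgErr_eq_expect [Fintype W] (π : Fin 2 → Matrix (B × W) (B × W) ℂ)
    (f : Fin M → Fin L → Fin K → Fin n → Fin 2)
    (Λ : Fin K → Fin M → Fin L → Matrix (Fin n → B) (Fin n → B) ℂ) :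
    avgErr π f Λ = 𝔼 m, 𝔼 ℓ, 𝔼 k, (1 - reTrace (Λ k m ℓ * bobWord π (f m ℓ k))) := by
  simp only [Fintype.expect_eq_sum_div_card, ← Finset.sum_div, div_div, Fintype.card_fin]
  rw [avgErr, inv_mul_eq_div, mul_right_comm, mul_rotate]
  rfl

lemma willieMsg_eq_expect (π : Fin 2 → Matrix (B × W) (B × W) ℂ)
    (f : Fin M → Fin L → Fin K → Fin n → Fin 2) (m : Fin M) :
    willieMsg π f m = 𝔼 ℓ, 𝔼 k, willieWord π (f m ℓ k) := by
  simp only [expect_eq_inv_card_smul_sum, ← Finset.smul_sum, smul_smul, Fintype.card_fin,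
    ← mul_inv]
  rw [willieMsg, Complex.coe_smul]

lemma willieAvg_eq_expect (π : Fin 2 → Matrix (B × W) (B × W) ℂ)
    (f : Fin M → Fin L → Fin K → Fin n → Fin 2) :
    willieAvg π f = 𝔼 m, willieMsg π f m := by
  simp only [willieMsg_eq_expect, expect_eq_inv_card_smul_sum, ← Finset.smul_sum, smul_smul,
    Fintype.card_fin, ← mul_inv, ← mul_assoc]
  rw [willieAvg, Complex.coe_smul]

variable [Fintype W] [DecidableEq B] [DecidableEq W] {Ω : Type*} [Fintype Ω] [Nonempty Ω]

-- The codebook itself is the key, so that every message induces exactly the average state at the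
-- eavesdropper.
lemma exists_codeExists_of_codebooks (hM : 0 < M) {x : Ω → Fin n → Fin 2}
    {Λ : (Fin M → Ω) → Fin M → Matrix (Fin n → B) (Fin n → B) ℂ} (hΛ0 : ∀ k m, 0 ≤ Λ k m)
    (hΛ1 : ∀ k, ∑ m, Λ k m ≤ 1) {ε δ δ' : ℝ}
    (herr : ∀ m, 𝔼 k, (1 - reTrace (Λ k m * bobWord π (x (k m)))) ≤ ε)
    (hdens : IsDensity (𝔼 o, willieWord π (x o)))
    (hcov : relEnt (𝔼 o, willieWord π (x o)) (tpow (willieOut π 0) n) ≤ δ) (hδ' : 0 ≤ δ') :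
    ∃ K, CodeExists π n M 1 K ε δ δ' := by
  have : Nonempty (Fin M) := Fin.pos_iff_nonempty.1 hM
  set e : Fin (Fintype.card (Fin M → Ω)) ≃ (Fin M → Ω) := (Fintype.equivFin _).symm
  set f : Fin M → Fin 1 → Fin (Fintype.card (Fin M → Ω)) → Fin n → Fin 2 := fun m _ k => x (e k m)
    with hf
  have hmsg : ∀ m, willieMsg π f m = 𝔼 o, willieWord π (x o) := fun m => by
    simp only [willieMsg_eq_expect, hf, Fintype.expect_const]
    rw [← expect_eval m fun o => willieWord π (x o)]
    exact Fintype.expect_equiv e _ _ fun _ => rfl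
  refine ⟨_, f, fun k m _ => Λ (e k) m, ⟨fun k m _ => nonneg_iff_posSemidef.1 (hΛ0 _ _),
    fun k => ?_⟩, ?_, ?_, _, hdens, ?_⟩
  · simp only [Fin.sum_univ_one]
    exact Matrix.le_iff.1 (hΛ1 (e k))
  · rw [avgErr_eq_expect]
    refine Finset.expect_le Finset.univ_nonempty fun m _ => ?_
    simp only [hf, Fintype.expect_const]
    exact (Fintype.expect_equiv e _ _ fun _ => rfl).trans_le (herr m)
  · rw [Covert, willieAvg_eq_expect]
    simpa only [hmsg, Fintype.expect_const] using hcov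
  · simpa only [hmsg, sub_self, traceNorm_zero, Finset.sum_const_zero, mul_zero] using hδ'

end CodesFromCodebooks

section RandomCode

open scoped BigOperators

variable {B W : Type*} [Fintype B] [DecidableEq B] [Fintype W] [DecidableEq W]
  {π : Fin 2 → Matrix (B × W) (B × W) ℂ}

lemma CodeExists.mono {n M L K : ℕ} {ε ε' δ δ' : ℝ} (h : CodeExists π n M L K ε δ δ')
    (hε : ε ≤ ε') : CodeExists π n M L K ε' δ δ' :=
  let ⟨f, Λ, hΛ, herr, hcov, hsec⟩ := h
  ⟨f, Λ, hΛ, herr.trans hε, hcov, hsec⟩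

lemma exists_codeExists (hπ : ∀ x, IsDensity (π x)) (hσ : SuppLE (bobOut π 1) (bobOut π 0))
    (hω : SuppLE (willieOut π 1) (willieOut π 0)) {η : ℝ} (hη : η ∈ Set.Ioo (0 : ℝ) 1)
    (hD : 3 * η ≤ relEnt (bobOut π 1) (bobOut π 0)) :
    ∃ v μ : ℝ, 0 < v ∧ ∀ (n a M : ℕ) (δ δ' : ℝ), 0 < n → a ≤ n → 0 < M → 0 ≤ δ' →
      a / n * μ ≤ η → n * relEnt (mixture (willieOut π) (a / n)) (willieOut π 0) ≤ δ →
      ∃ K, CodeExists π n M 1 K (4 * (Real.exp (-(η ^ 2 / 4 * a)) + 8 * Real.exp (-(v * a)) +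
        M * Real.exp (-((1 - η) * (relEnt (bobOut π 1) (bobOut π 0) - 3 * η) * a)))) δ δ' := by
  obtain ⟨u, μ, hu, hdecoder⟩ := exists_decoder (isDensity_bobOut hπ) hσ ⟨hη.1, hη.2.le⟩
  have hη' : 0 < 1 - η := sub_pos.2 hη.2
  refine ⟨u * (1 - η), μ, mul_pos hu hη', fun n a M δ δ' hn ha hM hδ' hμ hcov => ?_⟩
  obtain ⟨Λ, hΛ0, hΛ1, herr⟩ := hdecoder n a M hn ha (by linarith)
  have hp : (a / n : ℝ) ∈ Set.Icc (0 : ℝ) 1 :=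
    ⟨by positivity, (div_le_one (Nat.cast_pos.2 hn)).2 (Nat.cast_le.2 ha)⟩
  have hmix := isDensity_mixture (isDensity_willieOut hπ) hp
  have haverage : 𝔼 o : Fin n → Fin n, willieWord π (sampleWord a o) =
      piKronecker fun _ => mixture (willieOut π) (a / n) := expect_piKronecker_sampleWord hn ha _
  have : Nonempty (Fin n → Fin n) := ⟨id⟩
  obtain ⟨K, hK⟩ : ∃ K, CodeExists π n M 1 K _ δ δ' := by
    refine exists_codeExists_of_codebooks hM hΛ0 hΛ1 herr ?_ ?_ hδ'
    · rw [haverage]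
      exact isDensity_piKronecker fun _ => hmix
    · rw [haverage, tpow_eq_piKronecker, relEnt_piKronecker (fun _ => hmix)
        (fun _ => (isDensity_willieOut hπ 0).nonneg) fun _ => suppLE_mixture_zero hω _,
        Finset.sum_const, Finset.card_fin, nsmul_eq_mul]
      exact hcov
  refine ⟨K, hK.mono ?_⟩
  gcongr 4 * (Real.exp ?_ + 8 * Real.exp ?_ + M * Real.exp ?_)
  · linarith
  · linarith
  · have := mul_le_mul_of_nonneg_left hμ (by positivity : 0 ≤ (1 - η) * a)
    linarith

end RandomCode

section Asymptotics

variable {c : ℝ}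

lemma tendsto_sqrt_mul_floor_div (hc : 0 ≤ c) :
    Tendsto (fun n : ℕ => √n * (⌊c * √n⌋₊ / n)) atTop (nhds c) := by
  refine ((tendsto_nat_floor_mul_div_atTop hc).comp tendsto_sqrt_natCast_atTop).congr fun n => ?_
  rw [Function.comp_apply, mul_div_left_comm, Real.sqrt_div_self', mul_one_div]

lemma tendsto_floor_div (hc : 0 ≤ c) :
    Tendsto (fun n : ℕ => (⌊c * √n⌋₊ / n : ℝ)) atTop (nhds 0) := by
  refine ((tendsto_sqrt_mul_floor_div hc).div_atTop tendsto_sqrt_natCast_atTop).congr' ?_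
  filter_upwards [eventually_gt_atTop 0] with n hn
  have : √(n : ℝ) ≠ 0 := by positivity
  exact mul_div_cancel_left₀ _ this

lemma tendsto_exp_neg_mul_floor (hc : 0 < c) {d : ℝ} (hd : 0 < d) :
    Tendsto (fun n : ℕ => Real.exp (-(d * ⌊c * √n⌋₊))) atTop (nhds 0) :=
  Real.tendsto_exp_neg_atTop_nhds_zero.comp (Tendsto.const_mul_atTop hd
    (tendsto_natCast_atTop_atTop.comp
      (tendsto_nat_floor_atTop.comp (tendsto_sqrt_natCast_atTop.const_mul_atTop hc))))

lemma tendsto_exp_mul_sqrt_sub_mul_floor (hc : 0 ≤ c) {r d : ℝ} (hr : r < d * c) :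
    Tendsto (fun n : ℕ => Real.exp (√n * r - d * ⌊c * √n⌋₊)) atTop (nhds 0) := by
  refine Real.tendsto_exp_atBot.comp ((tendsto_sqrt_natCast_atTop.atTop_mul_neg (sub_neg.2 hr)
    (((tendsto_sqrt_mul_floor_div hc).const_mul d).const_sub r)).congr fun n => ?_)
  rcases n.eq_zero_or_pos with rfl | hn
  · simp
  · have hn' : (0 : ℝ) < n := Nat.cast_pos.2 hn
    calc √n * (r - d * (√n * (⌊c * √n⌋₊ / n)))
        = √n * r - √n ^ 2 * (d * (⌊c * √n⌋₊ / n)) := by ring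
      _ = √n * r - d * ⌊c * √n⌋₊ := by
          rw [Real.sq_sqrt hn'.le]
          field_simp

lemma tendsto_natCeil_exp_mul_exp_neg (hc : 0 ≤ c) {r d : ℝ} (hr₀ : 0 ≤ r) (hr : r < d * c) :
    Tendsto (fun n : ℕ => ⌈Real.exp (√n * r)⌉₊ * Real.exp (-(d * ⌊c * √n⌋₊))) atTop (nhds 0) := by
  have hlim := (tendsto_exp_mul_sqrt_sub_mul_floor hc hr).const_mul 2
  rw [mul_zero] at hlim
  refine squeeze_zero (fun n => by positivity) (fun n => ?_) hlim
  rw [sub_eq_add_neg, Real.exp_add, ← mul_assoc]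
  gcongr
  linarith [Nat.ceil_lt_add_one (Real.exp_pos (√n * r)).le,
    Real.one_le_exp (by positivity : 0 ≤ √n * r)]

end Asymptotics

section Achievability

variable {B W : Type*} [Fintype B] [DecidableEq B] [Fintype W] [DecidableEq W]
  {π : Fin 2 → Matrix (B × W) (B × W) ℂ}

-- Codewords of weight about `c √n` stay covert as long as `c ^ 2 * χ / 2 < δ`.
lemma exists_weight_and_margin {LS D χ δ : ℝ} (hLS : 0 ≤ LS) (hχ : 0 < χ) (hδ : 0 < δ)
    (hlt : LS < D / √(2⁻¹ * χ)) :
    ∃ c > 0, c ^ 2 * (χ / 2) < δ ∧ ∃ η ∈ Set.Ioo (0 : ℝ) 1,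
      √δ * LS < (1 - η) * (D - 3 * η) * c := by
  set s := √(2⁻¹ * χ) with hs
  have hs0 : 0 < s := Real.sqrt_pos.2 (by positivity)
  have hδ' : 0 < √δ := Real.sqrt_pos.2 hδ
  have hD : 0 < D := (div_pos_iff_of_pos_right hs0).1 (hLS.trans_lt hlt)
  obtain ⟨t, hLt, hts⟩ : ∃ t, LS / D < t ∧ t < 1 / s :=
    exists_between (by rwa [div_lt_div_iff₀ hD hs0, one_mul, ← lt_div_iff₀ hs0])
  have ht : 0 < t := (div_nonneg hLS hD.le).trans_lt hLt
  refine ⟨t * √δ, mul_pos ht hδ', ?_, ?_⟩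
  · calc (t * √δ) ^ 2 * (χ / 2) = (t * s) ^ 2 * δ := by
          rw [mul_pow, mul_pow, hs, Real.sq_sqrt hδ.le, Real.sq_sqrt (by positivity)]
          ring
      _ < 1 * δ := by
          gcongr
          exact pow_lt_one₀ (by positivity) ((lt_div_iff₀ hs0).1 hts) two_ne_zero
      _ = δ := one_mul δ
  · have hcont : Continuous fun η : ℝ => (1 - η) * (D - 3 * η) * (t * √δ) := by fun_prop
    have hzero : √δ * LS < (1 - 0) * (D - 3 * 0) * (t * √δ) := by
      rw [div_lt_iff₀ hD] at hLt
      linarith [mul_lt_mul_of_pos_left hLt hδ']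
    obtain ⟨η, hη, hlarge⟩ := (Eventually.and (Ioo_mem_nhdsGT (zero_lt_one' ℝ))
      (nhdsWithin_le_nhds ((hcont.tendsto 0).eventually_const_lt hzero))).exists
    exact ⟨η, hη, hlarge⟩

theorem achievableWithKey_of_lt_div_sqrt (hπ : ∀ x, IsDensity (π x))
    (hσ : SuppLE (bobOut π 1) (bobOut π 0)) (hω : SuppLE (willieOut π 1) (willieOut π 0))
    (hχ : 0 < chiSq (willieOut π 1) (willieOut π 0)) {LS : ℝ} (hLS : 0 < LS)
    (hlt : LS < relEnt (bobOut π 1) (bobOut π 0) /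
      √(2⁻¹ * chiSq (willieOut π 1) (willieOut π 0))) :
    AchievableWithKey π LS := by
  refine ⟨hLS, fun ε δ δ' hε hδ hδ' => ?_⟩
  set D := relEnt (bobOut π 1) (bobOut π 0)
  obtain ⟨c, hc, hcδ, η, hη, hmargin⟩ := exists_weight_and_margin hLS.le hχ hδ hlt
  have hDη : 0 < D - 3 * η := by
    have : 0 < (1 - η) * (D - 3 * η) * c := (by positivity : 0 ≤ √δ * LS).trans_lt hmargin
    exact (pos_iff_pos_of_mul_pos (pos_of_mul_pos_left this hc.le)).1 (sub_pos.2 hη.2)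
  obtain ⟨v, μ, hv, hcode⟩ := exists_codeExists hπ hσ hω hη (sub_nonneg.1 hDη.le)
  have herror := ((((tendsto_exp_neg_mul_floor hc (d := η ^ 2 / 4)
    (by have := hη.1; positivity)).add ((tendsto_exp_neg_mul_floor hc hv).const_mul 8)).add
      (tendsto_natCeil_exp_mul_exp_neg hc.le (by positivity) hmargin)).const_mul 4)
  rw [mul_zero, add_zero, add_zero, mul_zero] at herror
  filter_upwards [herror.eventually_lt_const hε,
    (tendsto_natCast_mul_relEnt_mixture (isDensity_willieOut hπ) hω
      (tendsto_sqrt_mul_floor_div hc.le) hc.ne').eventually_lt_const hcδ,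
    ((tendsto_floor_div hc.le).mul_const μ).eventually_lt_const (u := η) (by simpa using hη.1),
    (tendsto_floor_div hc.le).eventually_lt_const one_pos, eventually_gt_atTop 0]
    with n herr hcov hμ ha hn
  rw [div_lt_one (Nat.cast_pos.2 hn), Nat.cast_lt] at ha
  set r := √n * (√δ * LS)
  have hM : 0 < ⌈Real.exp r⌉₊ := Nat.ceil_pos.2 (Real.exp_pos r)
  obtain ⟨K, hK⟩ := hcode n ⌊c * √n⌋₊ ⌈Real.exp r⌉₊ δ δ' hn ha.le hM hδ'.le hμ.le hcov.le
  refine ⟨⌈Real.exp r⌉₊, K, ?_, hK.mono herr.le⟩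
  rw [Real.sqrt_mul (Nat.cast_nonneg n), mul_assoc, Real.le_log_iff_exp_le (Nat.cast_pos.2 hM)]
  exact Nat.le_ceil _

end Achievability

section Supremum

variable {S : Set ℝ}

lemma sSup_eq_of_forall_pos_of_forall_le_of_Ioo_subset {C : ℝ} (hC : 0 ≤ C)
    (hpos : ∀ x ∈ S, 0 < x) (hle : ∀ x ∈ S, x ≤ C) (hIoo : Set.Ioo 0 C ⊆ S) : sSup S = C := by
  refine le_antisymm (Real.sSup_le hle hC) (le_of_forall_lt_imp_le_of_dense fun x hx => ?_)
  rcases le_or_gt x 0 with hx₀ | hx₀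
  · exact hx₀.trans (Real.sSup_nonneg fun y hy => (hpos y hy).le)
  · exact le_csSup ⟨C, hle⟩ (hIoo ⟨hx₀, hx⟩)

-- A nonempty such `S` is unbounded above, and then `sSup S = 0` by convention.
lemma sSup_eq_zero_of_forall_pos_of_mul_mem (hpos : ∀ x ∈ S, 0 < x)
    (hmul : ∀ c > 0, ∀ x ∈ S, c * x ∈ S) : sSup S = 0 := by
  rcases S.eq_empty_or_nonempty with rfl | ⟨x, hx⟩
  · exact Real.sSup_empty
  refine Real.sSup_of_not_bddAbove fun ⟨b, hb⟩ => ?_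
  have hx₀ := hpos x hx
  have hle := hb (hmul ((|b| + 1) / x) (by positivity) x hx)
  rw [div_mul_cancel₀ _ hx₀.ne'] at hle
  linarith [le_abs_self b]

end Supremum

section IndistinguishableOutputs

open scoped BigOperators

variable {B W : Type*} [Fintype B] {π : Fin 2 → Matrix (B × W) (B × W) ℂ}

lemma chiSq_self {ι : Type*} [Fintype ι] [DecidableEq ι] (ρ : Matrix ι ι ℂ) : chiSq ρ ρ = 0 := by
  have hconst (a : ℝ) : (a : ℂ) • ρ + ((1 - a : ℝ) : ℂ) • ρ = ρ := by
    rw [← add_smul, ← Complex.ofReal_add, add_sub_cancel, Complex.ofReal_one, one_smul]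
  simp only [chiSq, hconst, relEnt_self, iteratedDeriv_const, OfNat.ofNat_ne_zero, if_false]

lemma willieWord_eq_tpow_of_willieOut_eq (h : willieOut π 1 = willieOut π 0) {n : ℕ}
    (x : Fin n → Fin 2) : willieWord π x = tpow (willieOut π 0) n := by
  have hout : ∀ y, willieOut π y = willieOut π 0 := Fin.forall_fin_two.2 ⟨rfl, h⟩
  simp only [willieWord, stringState, tpow, hout]

variable [Fintype W] [DecidableEq W]

lemma covert_of_willieOut_eq (h : willieOut π 1 = willieOut π 0) {n M L K : ℕ}
    (f : Fin M → Fin L → Fin K → Fin n → Fin 2) {δ : ℝ} (hδ : 0 ≤ δ) : Covert π f δ := by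
  rw [Covert, willieAvg_eq_expect]
  simp only [willieMsg_eq_expect, willieWord_eq_tpow_of_willieOut_eq h]
  have hzero : relEnt 0 (tpow (willieOut π 0) n) ≤ δ := by
    rwa [relEnt, Matrix.zero_mul, trace_zero, Complex.zero_re]
  rcases M with - | M
  · simpa only [Finset.univ_eq_empty, Finset.expect_empty] using hzero
  rcases L with - | L
  · simpa only [Finset.univ_eq_empty, Finset.expect_empty, Finset.expect_const_zero] using hzero
  rcases K with - | K
  · simpa only [Finset.univ_eq_empty, Finset.expect_empty, Finset.expect_const_zero] using hzero
  simpa only [Fintype.expect_const, relEnt_self] using hδ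

lemma AchievableWithKey.mul_of_willieOut_eq [DecidableEq B] (h : willieOut π 1 = willieOut π 0)
    {LS c : ℝ} (hLS : AchievableWithKey π LS) (hc : 0 < c) : AchievableWithKey π (c * LS) := by
  refine ⟨mul_pos hc hLS.1, fun ε δ δ' hε hδ hδ' => ?_⟩
  filter_upwards [hLS.2 ε (c ^ 2 * δ) δ' hε (by positivity) hδ'] with n hn
  obtain ⟨M, K, hrate, f, Λ, hΛ, herr, -, hsec⟩ := hn
  refine ⟨M, K, ?_, f, Λ, hΛ, herr, covert_of_willieOut_eq h f hδ.le, hsec⟩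
  calc √(n * δ) * (c * LS) = √(c ^ 2 * (n * δ)) * LS := by
        rw [Real.sqrt_mul (sq_nonneg c), Real.sqrt_sq hc.le]
        ring
    _ = √(n * (c ^ 2 * δ)) * LS := by rw [mul_left_comm]
    _ ≤ Real.log M := hrate

lemma keyAssistedCovertSecrecyCapacity_eq_zero_of_willieOut_eq [DecidableEq B]
    (h : willieOut π 1 = willieOut π 0) : keyAssistedCovertSecrecyCapacity π = 0 :=
  sSup_eq_zero_of_forall_pos_of_mul_mem (fun _ hLS => hLS.1)
    fun _ hc _ hLS => AchievableWithKey.mul_of_willieOut_eq h hLS hc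

end IndistinguishableOutputs

/-- **Theorem 1** (covert secrecy capacity with key assistance):
`C_S^key(P) = D(σ₁‖σ₀) / √((1/2) χ²(ω₁‖ω₀))`. -/
theorem covert_secrecy_capacity_with_key_assistance
    (π : Fin 2 → Matrix (B × W) (B × W) ℂ)
    (hπ : ∀ x, IsDensity (π x))
    (hσ : SuppLE (bobOut π 1) (bobOut π 0))
    (hω : SuppLE (willieOut π 1) (willieOut π 0)) :
    keyAssistedCovertSecrecyCapacity π =
      relEnt (bobOut π 1) (bobOut π 0) /
        Real.sqrt (2⁻¹ * chiSq (willieOut π 1) (willieOut π 0)) := by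
  -- When Willie's outputs agree, both sides are `0` only by convention: on the right as a division
  -- by `0`, on the left as the supremum of an empty or unbounded set.
  by_cases heq : willieOut π 1 = willieOut π 0
  · rw [keyAssistedCovertSecrecyCapacity_eq_zero_of_willieOut_eq heq, heq, chiSq_self, mul_zero,
      Real.sqrt_zero, div_zero]
  have hχ := chiSq_pos (isDensity_willieOut hπ) hω heq
  have hD := relEnt_nonneg (isDensity_bobOut hπ 1) (isDensity_bobOut hπ 0) hσ
  exact sSup_eq_of_forall_pos_of_forall_le_of_Ioo_subset (div_nonneg hD (Real.sqrt_nonneg _))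
    (fun _ hLS => hLS.1) (fun _ hLS => hLS.le_div_sqrt hπ hσ hω hχ)
    fun _ hLS => achievableWithKey_of_lt_div_sqrt hπ hσ hω hχ hLS.1 hLS.2

end Statement0

end CovertPaper
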